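/- arXiv:math/0410246 — 5 statements merged into one kernel-verified Lean document; each statement's English description precedes it below -/
import Mathlib

section
/- There exists a constant A₀ > 0, depending only on n and a_1,…,a_{n-1}, such that for every real number A ≥ A₀ and every finite set S of integers, each distinct from a_1,…,a_{n-1} and satisfying A ≤ |a| ≤ 2A for all a ∈ S, if the number fields K_a for a ∈ S are pairwise isomorphic, then |S| ≤ n(n−1)(n−2). -/
open Polynomial

/-- The Ankeny–Brauer–Chowla polynomial
`f_a(x) = (x−a_1)⋯(x−a_{n-1})(x−a) − 1 ∈ ℤ[x]`. -/
noncomputable def abcPolyZ (n : ℕ) (a : Fin (n - 1) → ℤ) (b : ℤ) : Polynomial ℤ :=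
  (∏ i, (X - C (a i))) * (X - C b) - 1

/-- The Ankeny–Brauer–Chowla polynomial viewed in `ℚ[x]`. -/
noncomputable def abcPolyQ (n : ℕ) (a : Fin (n - 1) → ℤ) (b : ℤ) : Polynomial ℚ :=
  (abcPolyZ n a b).map (Int.castRingHom ℚ)

/-- norm lower bound -/
theorem norm_lb {K : Type*} [Field K] [Algebra ℚ K] [FiniteDimensional ℚ K] (w : K)
    (hw : IsIntegral ℤ w) (h0 : w ≠ 0) : 1 ≤ ∏ σ : K →ₐ[ℚ] ℂ, ‖σ w‖ := by
  have h1 := Algebra.norm_eq_prod_embeddings ℚ ℂ w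
  have h2 : IsIntegral ℤ (Algebra.norm ℚ w) := Algebra.isIntegral_norm ℚ hw
  obtain ⟨k, hk⟩ := IsIntegrallyClosed.isIntegral_iff.1 h2
  have h3 : Algebra.norm ℚ w ≠ 0 := Algebra.norm_ne_zero_iff.2 h0
  rw [← norm_prod, ← h1, ← hk]
  have hk0 : k ≠ 0 := by
    rintro rfl
    apply h3
    rw [← hk]; simp
  have : (1:ℝ) ≤ |(k:ℝ)| := by
    exact_mod_cast Int.one_le_abs hk0
  simpa using this

theorem norm_ub {K : Type*} [Field K] [Algebra ℚ K] [FiniteDimensional ℚ K] (w v : K)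
    (hv : IsIntegral ℤ v) (h : w * v = 1) : ∏ σ : K →ₐ[ℚ] ℂ, ‖σ w‖ ≤ 1 := by
  have hv0 : v ≠ 0 := right_ne_zero_of_mul_eq_one h
  have h1 := norm_lb v hv hv0
  have h2 : (∏ σ : K →ₐ[ℚ] ℂ, ‖σ w‖) * ∏ σ : K →ₐ[ℚ] ℂ, ‖σ v‖ = 1 := by
    rw [← Finset.prod_mul_distrib]
    apply Finset.prod_eq_one
    intro σ _
    rw [← norm_mul, ← map_mul, h, map_one, norm_one]
  have h3 : 0 ≤ ∏ σ : K →ₐ[ℚ] ℂ, ‖σ w‖ := Finset.prod_nonneg fun _ _ => norm_nonneg _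
  nlinarith

theorem root_near (m : ℕ) (a : Fin m → ℤ) (hinj : Function.Injective a) (M A : ℝ)
    (hM : ∀ i, |(a i : ℝ)| ≤ M) (hA1 : 2 ^ (m+1) ≤ A) (hA2 : 2 * M + 2 ≤ A) (b : ℤ)
    (hb : A ≤ |(b:ℝ)|) (z : ℂ) (hz : (∏ i, (z - a i)) * (z - b) = 1) :
    ‖z - b‖ ≤ 1 ∨ ∃ i, ‖z - a i‖ ≤ 2 ^ m / A := by
  by_contra! hcon
  obtain ⟨h1, h2⟩ := hcon
  have hApos : 0 < A := lt_of_lt_of_le (by positivity) hA1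
  have hn : (∏ i, ‖z - a i‖) * ‖z - b‖ = 1 := by
    rw [← norm_prod, ← norm_mul, hz, norm_one]
  have hP0 : 0 ≤ ∏ i, ‖z - a i‖ := Finset.prod_nonneg fun _ _ => norm_nonneg _
  have hex : ∃ i, ‖z - a i‖ < 1 := by
    by_contra! hc
    have : 1 ≤ ∏ i, ‖z - a i‖ := by
      have h := Finset.prod_le_prod (s := Finset.univ) (f := fun _ : Fin m => (1:ℝ)) (g := fun i => ‖z - a i‖) (fun _ _ => zero_le_one) (fun i _ => hc i)
      simpa using h
    nlinarith
  obtain ⟨i0, hi0⟩ := hex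
  have hzb : A / 2 ≤ ‖z - b‖ := by
    have e1 : ‖(b:ℂ)‖ ≤ ‖z - b‖ + ‖z - a i0‖ + ‖(a i0 : ℂ)‖ := by
      have : (b:ℂ) = -(z - b) + (z - a i0) + a i0 := by ring
      calc ‖(b:ℂ)‖ = ‖-(z - b) + (z - a i0) + a i0‖ := by rw [← this]
        _ ≤ _ := by
          refine (norm_add₃_le).trans ?_
          rw [norm_neg]
    have e2 : ‖(b:ℂ)‖ = |(b:ℝ)| := by simp
    have e3 : ‖(a i0:ℂ)‖ = |(a i0:ℝ)| := by simp
    have := hM i0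
    rw [e2, e3] at e1
    linarith
  have hP : ∏ i, ‖z - a i‖ ≤ 2 / A := by
    rw [le_div_iff₀ hApos]
    nlinarith
  have hex2 : ∃ i, ‖z - a i‖ ≤ 1/2 := by
    by_contra! hc
    have : ∏ i : Fin m, (1/2 : ℝ) < ∏ i, ‖z - a i‖ := by
      apply Finset.prod_lt_prod_of_nonempty
      · intros; norm_num
      · intro i _; exact hc i
      · exact ⟨i0, Finset.mem_univ _⟩
    have h4 : (1/2:ℝ)^m < 2 / A := by
      simpa using this.trans_le hP
    rw [lt_div_iff₀ hApos] at h4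
    have : (1/2:ℝ)^m * 2^(m+1) = 2 := by
      rw [pow_succ, ← mul_assoc, ← mul_pow]; norm_num
    have h5 : (1/2:ℝ)^m * 2^(m+1) ≤ (1/2:ℝ)^m * A := by gcongr
    linarith
  obtain ⟨i, hi⟩ := hex2
  have h2i := h2 i
  rw [← Finset.mul_prod_erase Finset.univ _ (Finset.mem_univ i)] at hP
  have h6 : (1/2:ℝ)^(m-1) ≤ ∏ j ∈ Finset.univ.erase i, ‖z - a j‖ := by
    have : ∏ j ∈ (Finset.univ.erase i : Finset (Fin m)), (1/2 : ℝ) ≤ ∏ j ∈ Finset.univ.erase i, ‖z - a j‖ := by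
      apply Finset.prod_le_prod
      · intros; norm_num
      · intro j hj
        have hne : a i - a j ≠ 0 := fun h => Finset.ne_of_mem_erase hj (hinj (sub_eq_zero.1 h)).symm
        have h7 : (1:ℝ) ≤ |((a i - a j : ℤ):ℝ)| := by exact_mod_cast Int.one_le_abs hne
        have h8 : ‖((a i - a j : ℤ):ℂ)‖ = |((a i - a j : ℤ):ℝ)| := Complex.norm_intCast _
        have h9 : ‖((a i - a j : ℤ):ℂ)‖ ≤ ‖z - a j‖ + ‖z - a i‖ := by
          have : ((a i - a j : ℤ):ℂ) = (z - a j) - (z - a i) := by push_cast; ring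
          rw [this]; exact norm_sub_le _ _
        linarith
    simpa [Finset.card_erase_of_mem] using this
  have hm : 1 ≤ m := Nat.one_le_iff_ne_zero.2 (by rintro rfl; exact i.elim0)
  have h10 : 2 ^ m / A * (1/2:ℝ)^(m-1) = 2 / A := by
    obtain ⟨k, rfl⟩ := Nat.exists_eq_add_of_le' hm
    simp only [Nat.add_sub_cancel]
    have : (2:ℝ)^k * (1/2)^k = 1 := by rw [← mul_pow]; norm_num
    rw [pow_succ]
    field_simp
    linear_combination this
  have h11 : 2 ^ m / A * (1/2:ℝ)^(m-1) < ‖z - a i‖ * ∏ j ∈ Finset.univ.erase i, ‖z - a j‖ := by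
    apply mul_lt_mul h2i h6 (by positivity) (norm_nonneg _)
  linarith

theorem sub_lb (z : ℂ) (x y : ℤ) : |((x:ℝ) - y)| ≤ ‖z - x‖ + ‖z - y‖ := by
  have h8 : ‖((x - y : ℤ):ℂ)‖ = |((x - y : ℤ):ℝ)| := Complex.norm_intCast _
  have h9 : ‖((x - y : ℤ):ℂ)‖ ≤ ‖z - y‖ + ‖z - x‖ := by
    have : ((x - y : ℤ):ℂ) = (z - y) - (z - x) := by push_cast; ring
    rw [this]; exact norm_sub_le _ _
  push_cast at h8 h9
  linarith

theorem labels {K : Type*} [Field K] [Algebra ℚ K] [FiniteDimensional ℚ K] (m : ℕ)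
    (hK : Module.finrank ℚ K = m + 1)
    (a : Fin m → ℤ) (hinj : Function.Injective a) (M A : ℝ)
    (hM : ∀ i, |(a i : ℝ)| ≤ M) (hA1 : 2 ^ (m+2) ≤ A) (hA2 : 2 * M + 4 ≤ A) (b : ℤ)
    (hb : A ≤ |(b:ℝ)|) (u : K) (hu : (∏ i, (u - a i)) * (u - b) = 1) (hui : IsIntegral ℤ u) :
    ∃ e : (K →ₐ[ℚ] ℂ) ≃ Option (Fin m),
      ‖(e.symm none) u - b‖ ≤ 1 ∧ ∀ i, ‖(e.symm (some i)) u - a i‖ ≤ 2 ^ m / A := by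
  classical
  have hApos : 0 < A := lt_of_lt_of_le (by positivity) hA1
  have hsmall : 2 ^ m / A ≤ 1 / 2 := by
    rw [div_le_iff₀ hApos]
    have : (0:ℝ) ≤ 2 ^ m := by positivity
    rw [pow_add] at hA1
    linarith
  have hint : ∀ k : ℤ, IsIntegral ℤ (u - k) := fun k => hui.sub (isIntegral_algebraMap (x := k))
  have key : ∀ σ : K →ₐ[ℚ] ℂ, ∃ o : Option (Fin m),
      (o = none → ‖σ u - b‖ ≤ 1) ∧ ∀ i, o = some i → ‖σ u - a i‖ ≤ 2 ^ m / A := by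
    intro σ
    have hz : (∏ i, (σ u - a i)) * (σ u - b) = 1 := by
      have := congrArg σ hu
      simpa using this
    rcases root_near m a hinj M A hM (by rw [pow_succ] at hA1; have : (0:ℝ) ≤ 2 ^ (m+1) := by positivity
                                         linarith) (by linarith) b hb (σ u) hz with h | ⟨i, h⟩
    · exact ⟨none, fun _ => h, by simp⟩
    · refine ⟨some i, by simp, ?_⟩
      rintro j hj
      cases hj
      exact h
  choose l hl1 hl2 using key
  have hba : ∀ i, A / 2 + 2 ≤ |(b:ℝ) - a i| := by
    intro i
    have := abs_sub_abs_le_abs_sub (b:ℝ) (a i)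
    have := hM i
    linarith
  have hnone : ∃ σ, l σ = none := by
    have hp : ∏ σ : K →ₐ[ℚ] ℂ, ‖σ (u - b)‖ ≤ 1 := by
      apply norm_ub (u - b) (∏ i, (u - a i))
      · exact IsIntegral.prod _ fun i _ => hint _
      · rw [mul_comm]; exact hu
    obtain ⟨σ, hσ⟩ : ∃ σ : K →ₐ[ℚ] ℂ, ‖σ (u - b)‖ ≤ 1 := by
      by_contra! hc
      have hne : Nonempty (K →ₐ[ℚ] ℂ) := by
        rw [← Fintype.card_pos_iff, AlgHom.card, hK]; omega
      have : ∏ σ : K →ₐ[ℚ] ℂ, (1:ℝ) < ∏ σ : K →ₐ[ℚ] ℂ, ‖σ (u - b)‖ :=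
        Finset.prod_lt_prod_of_nonempty (by simp) (fun σ _ => hc σ) Finset.univ_nonempty
      simp only [Finset.prod_const_one] at this
      linarith
    refine ⟨σ, ?_⟩
    rcases h : l σ with _ | i
    · rfl
    · have h1 := hl2 σ i h
      have h2 := sub_lb (σ u) b (a i)
      have h3 := hba i
      have : ‖σ u - b‖ ≤ 1 := by simpa using hσ
      linarith
  have hsome : ∀ i, ∃ σ, l σ = some i := by
    intro i
    by_contra! hc
    obtain ⟨s, hs⟩ := hnone
    have hp : ∏ σ : K →ₐ[ℚ] ℂ, ‖σ (u - a i)‖ ≤ 1 := by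
      apply norm_ub (u - a i) ((∏ j ∈ Finset.univ.erase i, (u - a j)) * (u - b))
      · exact (IsIntegral.prod _ fun i _ => hint _).mul (hint _)
      · rw [← mul_assoc, Finset.mul_prod_erase Finset.univ (fun j => u - (a j : K)) (Finset.mem_univ i)]
        exact hu
    rw [← Finset.mul_prod_erase Finset.univ _ (Finset.mem_univ s)] at hp
    have hbig : ∀ σ, l σ = none → A / 2 + 1 ≤ ‖σ (u - a i)‖ := by
      intro σ hσ
      have h1 := hl1 σ hσ
      have h2 := sub_lb (σ u) b (a i)
      have h3 := hba i
      have : ‖σ (u - a i)‖ = ‖σ u - a i‖ := by simp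
      linarith
    have h6 : ∏ σ ∈ (Finset.univ.erase s : Finset (K →ₐ[ℚ] ℂ)), (1/2:ℝ) ≤ ∏ σ ∈ Finset.univ.erase s, ‖σ (u - a i)‖ := by
      apply Finset.prod_le_prod
      · intros; norm_num
      · intro σ _
        rcases h : l σ with _ | j
        · have := hbig σ h; linarith
        · have hne : a i - a j ≠ 0 := by
            intro h'
            have := hinj (sub_eq_zero.1 h')
            exact hc σ (by rw [h, this])
          have h7 : (1:ℝ) ≤ |((a i - a j : ℤ):ℝ)| := by exact_mod_cast Int.one_le_abs hne
          push_cast at h7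
          have h8 := sub_lb (σ u) (a i) (a j)
          have h9 := hl2 σ j h
          have : ‖σ (u - a i)‖ = ‖σ u - a i‖ := by simp
          linarith
    have hcard : (Finset.univ.erase s : Finset (K →ₐ[ℚ] ℂ)).card = m := by
      rw [Finset.card_erase_of_mem (Finset.mem_univ _), Finset.card_univ, AlgHom.card, hK]; rfl
    rw [Finset.prod_const, hcard] at h6
    have h10 : (A / 2 + 1) * (1/2:ℝ)^m ≤ 1 := by
      refine le_trans ?_ hp
      apply mul_le_mul (hbig s hs) h6 (by positivity) (norm_nonneg _)
    have h11 : (2:ℝ)^m * (1/2)^m = 1 := by rw [← mul_pow]; norm_num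
    have h12 : (2:ℝ)^m * (1/2)^m < (A/2 + 1) * (1/2)^m := by
      apply mul_lt_mul_of_pos_right _ (by positivity)
      rw [pow_add] at hA1
      have : (0:ℝ) ≤ 2 ^ m := by positivity
      linarith
    linarith
  have hsurj : Function.Surjective l := by
    rintro (_ | i)
    · exact hnone
    · exact hsome i
  have hbij : Function.Bijective l := by
    rw [Fintype.bijective_iff_surjective_and_card]
    refine ⟨hsurj, ?_⟩
    rw [AlgHom.card, hK]; simp
  refine ⟨Equiv.ofBijective l hbij, ?_, fun i => ?_⟩
  · exact hl1 _ (Equiv.ofBijective_apply_symm_apply l hbij none)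
  · exact hl2 _ i (Equiv.ofBijective_apply_symm_apply l hbij (some i))

theorem abc_monic (m : ℕ) (a : Fin m → ℤ) (b : ℤ) :
    ((∏ i, (X - C (a i))) * (X - C b) - 1 : ℤ[X]).Monic ∧
    ((∏ i, (X - C (a i))) * (X - C b) - 1 : ℤ[X]).natDegree = m + 1 := by
  have h1 : ((∏ i, (X - C (a i))) * (X - C b) : ℤ[X]).Monic :=
    (monic_prod_of_monic _ _ fun i _ => monic_X_sub_C _).mul (monic_X_sub_C _)
  have h2 : ((∏ i, (X - C (a i))) * (X - C b) : ℤ[X]).natDegree = m + 1 := by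
    rw [Monic.natDegree_mul (monic_prod_of_monic _ _ fun i _ => monic_X_sub_C _) (monic_X_sub_C _),
      natDegree_X_sub_C, natDegree_prod_of_monic _ _ fun i _ => monic_X_sub_C _]
    simp only [natDegree_X_sub_C]
    simp
  have h3 : (1 : ℤ[X]).degree < ((∏ i, (X - C (a i))) * (X - C b) : ℤ[X]).degree := by
    rw [degree_one, degree_eq_natDegree h1.ne_zero, h2]
    exact_mod_cast Nat.succ_pos m
  refine ⟨h1.sub_of_left h3, ?_⟩
  rw [natDegree_sub_eq_left_of_natDegree_lt, h2]
  rw [h2]; simp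

theorem abc_eval₂ {R : Type*} [CommRing R] (n : ℕ) (a : Fin (n-1) → ℤ) (b : ℤ) (f : ℤ →+* R) (x : R) :
    eval₂ f x (abcPolyZ n a b) = (∏ i, (x - a i)) * (x - b) - 1 := by
  simp only [abcPolyZ, eval₂_mul, eval₂_sub, eval₂_finsetProd, eval₂_X, eval₂_C, eval₂_one]
  simp only [eq_intCast]

theorem abc_irred (m : ℕ) (a : Fin m → ℤ) (hinj : Function.Injective a) (b : ℤ)
    (hb : ∀ i, b ≠ a i) :
    Irreducible ((∏ i, (X - C (a i))) * (X - C b) - 1 : ℤ[X]) := by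
  obtain ⟨hm, hd⟩ := abc_monic m a b
  rw [hm.irreducible_iff_natDegree]
  refine ⟨by intro h; rw [h] at hd; simp at hd, ?_⟩
  intro f g hf hg hfg
  by_contra! hcon
  have hdeg : f.natDegree + g.natDegree = m + 1 := by
    rw [← hf.natDegree_mul hg, hfg, hd]
  have hz : ∀ x : ℤ, f.eval x * g.eval x = -1 → (f + g).eval x = 0 := by
    intro x hx
    rw [eval_add]
    rcases Int.mul_eq_neg_one_iff_eq_one_or_neg_one.1 hx with ⟨h1, h2⟩ | ⟨h1, h2⟩ <;> simp [h1, h2]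
  have hsum : f + g = 0 := by
    apply eq_zero_of_natDegree_lt_card_of_eval_eq_zero (f + g)
      (f := fun o : Option (Fin m) => o.elim b a)
    · rintro (_ | i) (_ | j) h
      · rfl
      · exact absurd h (hb j)
      · exact absurd h.symm (hb i)
      · exact congrArg some (hinj h)
    · rintro (_ | i)
      · apply hz
        rw [← eval_mul, hfg]
        simp
      · apply hz
        rw [← eval_mul, hfg]
        have : ∏ j, (a i - a j) = 0 := Finset.prod_eq_zero (Finset.mem_univ i) (by simp)
        simp [eval_prod, this]
    · have := natDegree_add_le f g
      simp only [Fintype.card_option, Fintype.card_fin]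
      have h1 := Nat.pos_of_ne_zero hcon.1
      have h2 := Nat.pos_of_ne_zero hcon.2
      refine lt_of_le_of_lt this ?_
      rw [max_lt_iff]; omega
  have hfg' : f = -g := eq_neg_of_add_eq_zero_left hsum
  have : f.leadingCoeff = -g.leadingCoeff := by rw [hfg', leadingCoeff_neg]
  rw [hf.leadingCoeff, hg.leadingCoeff] at this
  norm_num at this

theorem collide {K : Type*} [Field K] [Algebra ℚ K] [FiniteDimensional ℚ K] (m : ℕ)
    (hK : Module.finrank ℚ K = m + 1)
    (a : Fin m → ℤ) (M A : ℝ) (hM1 : 0 ≤ M)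
    (hM : ∀ i, |(a i : ℝ)| ≤ M) (hA1 : 2 ^ (m+2) ≤ A)
    (hA3 : 20 * 4 ^ m * (2 * M + 2) ^ (m+1) < A) (b b' : ℤ)
    (hb : |(b:ℝ)| ≤ 2 * A) (hb' : |(b':ℝ)| ≤ 2 * A) (u u' : K)
    (hu : (∏ i, (u - a i)) * (u - b) = 1) (hui : IsIntegral ℤ u)
    (hu' : (∏ i, (u' - a i)) * (u' - b') = 1) (hui' : IsIntegral ℤ u')
    (e e' : (K →ₐ[ℚ] ℂ) ≃ Option (Fin m))
    (he : ‖(e.symm none) u - b‖ ≤ 1 ∧ ∀ i, ‖(e.symm (some i)) u - a i‖ ≤ 2 ^ m / A)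
    (he' : ‖(e'.symm none) u' - b'‖ ≤ 1 ∧ ∀ i, ‖(e'.symm (some i)) u' - a i‖ ≤ 2 ^ m / A)
    (i j : Fin m) (hij : i ≠ j) (h0 : e.symm none = e'.symm none)
    (h1 : e.symm (some i) = e'.symm (some i)) (h2 : e.symm (some j) = e'.symm (some j)) :
    b = b' := by
  classical
  have hApos : 0 < A := lt_of_lt_of_le (by positivity) hA1
  have hA4 : 4 ≤ A := by
    refine le_trans ?_ hA1
    rw [pow_add]
    have : (1:ℝ) ≤ 2 ^ m := one_le_pow₀ (by norm_num)
    linarith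
  have hsmall : 2 ^ m / A ≤ 1 := by
    rw [div_le_iff₀ hApos]
    have : (0:ℝ) ≤ 2 ^ m := by positivity
    rw [pow_add] at hA1
    linarith
  by_cases huu : u = u'
  · subst huu
    have hne : (∏ i, (u - (a i : K))) ≠ 0 := left_ne_zero_of_mul_eq_one hu
    have := mul_left_cancel₀ hne (hu.trans hu'.symm)
    have h3 : (b:K) = b' := by simpa using this
    have : CharZero K := algebraRat.charZero K
    exact_mod_cast h3
  exfalso
  have hlb := norm_lb (u - u') (hui.sub hui') (sub_ne_zero.2 huu)
  set s0 := e.symm none with hs0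
  set s1 := e.symm (some i) with hs1
  set s2 := e.symm (some j) with hs2
  have n01 : s1 ≠ s0 := by simp [hs0, hs1]
  have n02 : s2 ≠ s0 := by simp [hs0, hs2]
  have n12 : s2 ≠ s1 := by simp [hs1, hs2, hij.symm]
  rw [← Finset.mul_prod_erase Finset.univ _ (Finset.mem_univ s0),
    ← Finset.mul_prod_erase (Finset.univ.erase s0) _ (a := s1) (by simp [n01]),
    ← Finset.mul_prod_erase ((Finset.univ.erase s0).erase s1) _ (a := s2) (by simp [n02, n12])] at hlb
  have B0 : ‖s0 (u - u')‖ ≤ 5 * A := by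
    have e1 : s0 (u - u') = (s0 u - b) - (s0 u' - b') + ((b:ℂ) - b') := by rw [map_sub]; ring
    have e2 : ‖(b:ℂ)‖ = |(b:ℝ)| := by simp
    have e3 : ‖(b':ℂ)‖ = |(b':ℝ)| := by simp
    have e4 := norm_add_le ((s0 u - b) - (s0 u' - b')) ((b:ℂ) - b')
    have e5 := norm_sub_le (s0 u - b) (s0 u' - b')
    have e6 := norm_sub_le (b:ℂ) b'
    have e7 := he.1
    have e8 := he'.1
    rw [← h0] at e8
    rw [e1]
    linarith
  have Bs : ∀ (s : K →ₐ[ℚ] ℂ) (i : Fin m), s = e.symm (some i) → s = e'.symm (some i) →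
      ‖s (u - u')‖ ≤ 2 * (2 ^ m / A) := by
    intro s i hs hs'
    have e1 : s (u - u') = (s u - a i) - (s u' - a i) := by rw [map_sub]; ring
    have e5 := norm_sub_le (s u - a i) (s u' - a i)
    have e7 := he.2 i
    have e8 := he'.2 i
    rw [← hs] at e7
    rw [← hs'] at e8
    rw [e1]; linarith
  have B1 := Bs s1 i rfl h1
  have B2 := Bs s2 j rfl h2
  have bd : ∀ (z : ℂ) (i : Fin m), ‖z - a i‖ ≤ 2 ^ m / A → ‖z‖ ≤ M + 1 := by
    intro z i hz
    have e1 := norm_add_le (z - a i) (a i)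
    rw [sub_add_cancel] at e1
    have e3 : ‖(a i:ℂ)‖ = |(a i:ℝ)| := by simp
    have := hM i
    linarith
  have B3 : ∏ s ∈ ((Finset.univ.erase s0).erase s1).erase s2, ‖s (u - u')‖ ≤ (2 * M + 2) ^ (m+1) := by
    have hc : (((Finset.univ.erase s0).erase s1).erase s2).card ≤ m + 1 := by
      refine (Finset.card_le_univ _).trans ?_
      rw [AlgHom.card, hK]
    refine le_trans ?_ (pow_le_pow_right₀ (by linarith) hc)
    rw [← Finset.prod_const]
    apply Finset.prod_le_prod
    · intros; exact norm_nonneg _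
    · intro s hs
      have hs0' : s ≠ s0 := by
        simp only [Finset.mem_erase] at hs
        exact hs.2.2.1
      have g1 : ‖s u‖ ≤ M + 1 := by
        rcases h : e s with _ | k
        · exact absurd (e.eq_symm_apply.2 h) hs0'
        · have := he.2 k
          rw [← h, e.symm_apply_apply] at this
          exact bd _ _ this
      have g2 : ‖s u'‖ ≤ M + 1 := by
        rcases h : e' s with _ | k
        · exact absurd (e'.eq_symm_apply.2 h) (h0 ▸ hs0')
        · have := he'.2 k
          rw [← h, e'.symm_apply_apply] at this
          exact bd _ _ this
      rw [map_sub]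
      have := norm_sub_le (s u) (s u')
      linarith
  have hfin : ‖s0 (u - u')‖ * (‖s1 (u - u')‖ * (‖s2 (u - u')‖ *
      ∏ s ∈ ((Finset.univ.erase s0).erase s1).erase s2, ‖s (u - u')‖)) ≤
      5 * A * (2 * (2 ^ m / A) * (2 * (2 ^ m / A) * (2 * M + 2) ^ (m+1))) := by
    gcongr
  have hcalc : 5 * A * (2 * (2 ^ m / A) * (2 * (2 ^ m / A) * (2 * M + 2) ^ (m+1))) =
      20 * 4 ^ m * (2 * M + 2) ^ (m+1) / A := by
    have : (4:ℝ) ^ m = 2 ^ m * 2 ^ m := by rw [← mul_pow]; norm_num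
    rw [this]
    field_simp
    ring
  have : 20 * 4 ^ m * (2 * M + 2) ^ (m+1) / A < 1 := by
    rw [div_lt_one hApos]; exact hA3
  linarith

/-- **Proposition 4.2 (Sprindzhuk).**  For `A` sufficiently large, if `S` is a set of
integers `a` with `A ≤ |a| ≤ 2A` such that the Ankeny–Brauer–Chowla fields `K_a`,
`a ∈ S`, are pairwise isomorphic, then `|S| ≤ n(n−1)(n−2)`. -/
theorem abc_fields_rarely_isomorphic (n : ℕ) (hn : 3 ≤ n)
    (a : Fin (n - 1) → ℤ) (hinj : Function.Injective a) :
    ∃ A₀ : ℝ, 0 < A₀ ∧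
      ∀ A : ℝ, A₀ ≤ A →
        ∀ S : Finset ℤ,
          (∀ b ∈ S, (∀ i, b ≠ a i) ∧ A ≤ |(b : ℝ)| ∧ |(b : ℝ)| ≤ 2 * A) →
          (∀ b ∈ S, ∀ b' ∈ S,
            Nonempty (AdjoinRoot (abcPolyQ n a b) ≃+* AdjoinRoot (abcPolyQ n a b'))) →
          S.card ≤ n * (n - 1) * (n - 2) := by
  classical
  set M : ℝ := ∑ i, |(a i : ℝ)| with hMdef
  have hM1 : 0 ≤ M := Finset.sum_nonneg fun _ _ => abs_nonneg _
  have hM : ∀ i, |(a i : ℝ)| ≤ M := fun i =>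
    Finset.single_le_sum (f := fun i => |(a i : ℝ)|) (fun _ _ => abs_nonneg _) (Finset.mem_univ i)
  have hT1 : (0:ℝ) ≤ 20 * 4 ^ (n-1) * (2 * M + 2) ^ (n-1+1) := by positivity
  have hT2 : (0:ℝ) < 2 ^ (n-1+2) := by positivity
  refine ⟨2 ^ (n-1+2) + (2 * M + 4) + 20 * 4 ^ (n-1) * (2 * M + 2) ^ (n-1+1), by positivity, ?_⟩
  intro A hA S hS hiso
  have hA1 : 2 ^ (n-1+2) ≤ A := by linarith
  have hA2 : 2 * M + 4 ≤ A := by linarith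
  have hA3 : 20 * 4 ^ (n-1) * (2 * M + 2) ^ (n-1+1) < A := by linarith
  rcases S.eq_empty_or_nonempty with rfl | ⟨b0, hb0⟩
  · simp
  obtain ⟨hmon, hdeg⟩ := abc_monic (n-1) a b0
  have hirr : Irreducible (abcPolyQ n a b0) := by
    have := abc_irred (n-1) a hinj b0 (hS b0 hb0).1
    exact (hmon.irreducible_iff_irreducible_map_fraction_map (K := ℚ)).1 this
  haveI : Fact (Irreducible (abcPolyQ n a b0)) := ⟨hirr⟩
  have hmonQ : (abcPolyQ n a b0).Monic := hmon.map _
  have hdegQ : (abcPolyQ n a b0).natDegree = n - 1 + 1 := by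
    rw [← hdeg]; exact hmon.natDegree_map _
  haveI : FiniteDimensional ℚ (AdjoinRoot (abcPolyQ n a b0)) := hmonQ.finite_adjoinRoot
  have hK : Module.finrank ℚ (AdjoinRoot (abcPolyQ n a b0)) = n - 1 + 1 := by
    rw [(AdjoinRoot.powerBasis hirr.ne_zero).finrank, AdjoinRoot.powerBasis_dim, hdegQ]
  have hex : ∀ b : S, ∃ u : AdjoinRoot (abcPolyQ n a b0),
      (∏ i, (u - a i)) * (u - (b:ℤ)) = 1 ∧ IsIntegral ℤ u := by
    rintro ⟨b, hb⟩
    obtain ⟨φ⟩ := hiso b hb b0 hb0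
    have h1 : (∏ i, (AdjoinRoot.root (abcPolyQ n a b) - a i)) *
        (AdjoinRoot.root (abcPolyQ n a b) - b) = 1 := by
      have := AdjoinRoot.eval₂_root (abcPolyQ n a b)
      have h3 : eval₂ ((AdjoinRoot.of (abcPolyQ n a b)).comp (Int.castRingHom ℚ))
          (AdjoinRoot.root (abcPolyQ n a b)) (abcPolyZ n a b) = 0 := by
        rw [← eval₂_map]; exact this
      rw [abc_eval₂] at h3
      exact sub_eq_zero.1 h3
    have h2 : (∏ i, (φ (AdjoinRoot.root (abcPolyQ n a b)) - a i)) *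
        (φ (AdjoinRoot.root (abcPolyQ n a b)) - b) = 1 := by
      simpa using congrArg φ h1
    refine ⟨φ (AdjoinRoot.root _), h2, abcPolyZ n a b, (abc_monic (n-1) a b).1, ?_⟩
    rw [abc_eval₂, h2, sub_self]
  choose u hu hui using hex
  have hl := fun b : S => labels (n-1) hK a hinj M A hM hA1 hA2 (b:ℤ) (hS b b.2).2.1 (u b) (hu b) (hui b)
  choose e he using hl
  let i0 : Fin (n-1) := ⟨0, by omega⟩
  let i1 : Fin (n-1) := ⟨1, by omega⟩
  have hi01 : i0 ≠ i1 := by simp [i0, i1, Fin.ext_iff]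
  let t : Fin 3 ↪ Option (Fin (n-1)) := ⟨![none, some i0, some i1], by
    intro x y h
    fin_cases x <;> fin_cases y <;> simp_all [hi01, hi01.symm]⟩
  let F : S → (Fin 3 ↪ (AdjoinRoot (abcPolyQ n a b0) →ₐ[ℚ] ℂ)) := fun b => t.trans (e b).symm.toEmbedding
  have hF : Function.Injective F := by
    intro b b' h
    have hx : ∀ x, (e b).symm (t x) = (e b').symm (t x) := fun x => DFunLike.congr_fun h x
    apply Subtype.ext
    exact collide (n-1) hK a M A hM1 hM hA1 hA3 b b' (hS b b.2).2.2 (hS b' b'.2).2.2 (u b) (u b')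
      (hu b) (hui b) (hu b') (hui b') (e b) (e b') (he b) (he b') i0 i1 hi01 (hx 0) (hx 1) (hx 2)
  have hcard := Fintype.card_le_of_injective F hF
  rw [Fintype.card_coe, Fintype.card_embedding_eq, AlgHom.card, hK, Fintype.card_fin] at hcard
  refine hcard.trans (le_of_eq ?_)
  obtain ⟨k, rfl⟩ := Nat.exists_eq_add_of_le' hn
  simp [Nat.descFactorial]
  ring
end

section
/- Let n ≥ 3 and ℓ ≥ 1 be integers. There exist pairwise distinct nonzero integers a_1,…,a_{n-1} such that the polynomial f(t,x) = (x−a_1)⋯(x−a_{n-1})·(x − (−1)^{n-1}(t^ℓ−1)/(a_1⋯a_{n-1})) − 1, viewed as a polynomial in x over the rational function field ℚ(t), is separable with Galois group isomorphic to the symmetric group S_n, and the specialized polynomial f(0,x) ∈ ℚ[x] is separable. -/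
open Polynomial

/-- The main polynomial
`f(t,x) = (x−a_1)⋯(x−a_{n-1})·(x − (−1)^{n-1}(t^ℓ−1)/(a_1⋯a_{n-1})) − 1`,
viewed as a polynomial in `x` over the rational function field `ℚ(t)`. -/
noncomputable def mainPoly (n ℓ : ℕ) (a : Fin (n - 1) → ℤ) : Polynomial (RatFunc ℚ) :=
  (∏ i, (X - C ((a i : ℤ) : RatFunc ℚ))) *
    (X - C ((-1) ^ (n - 1) * (RatFunc.X ^ ℓ - 1) / (((∏ i, a i : ℤ) : RatFunc ℚ)))) - 1

/-- The specialization `f(0,x) ∈ ℚ[x]` of the main polynomial at `t = 0`. -/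
noncomputable def mainPolyZero (n ℓ : ℕ) (a : Fin (n - 1) → ℤ) : Polynomial ℚ :=
  (∏ i, (X - C ((a i : ℤ) : ℚ))) *
    (X - C ((-1) ^ (n - 1) * ((0 : ℚ) ^ ℓ - 1) / (((∏ i, a i : ℤ) : ℚ)))) - 1

noncomputable def gP (R : Type*) [CommRing R] {m : ℕ} (a : Fin m → ℤ) (c : R) : R[X] :=
  (∏ i, (X - C ((a i : ℤ) : R))) * (X - C c) - 1

theorem gP_map {R S : Type*} [CommRing R] [CommRing S] (φ : R →+* S) {m : ℕ}
    (a : Fin m → ℤ) (c : R) : (gP R a c).map φ = gP S a (φ c) := by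
  simp [gP, Polynomial.map_prod]

theorem prodP_monic (R : Type*) [CommRing R] {m : ℕ} (a : Fin m → ℤ) (c : R) :
    ((∏ i, (X - C ((a i : ℤ) : R))) * (X - C c)).Monic :=
  (monic_prod_of_monic _ _ fun i _ => monic_X_sub_C _).mul (monic_X_sub_C _)

theorem prodP_natDegree (R : Type*) [CommRing R] [Nontrivial R] {m : ℕ} (a : Fin m → ℤ) (c : R) :
    ((∏ i, (X - C ((a i : ℤ) : R))) * (X - C c)).natDegree = m + 1 := by
  rw [(monic_prod_of_monic _ _ fun i _ => monic_X_sub_C _).natDegree_mul (monic_X_sub_C _),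
    natDegree_prod_of_monic _ _ fun i _ => monic_X_sub_C _]
  simp only [natDegree_X_sub_C]
  simp

theorem gP_natDegree (R : Type*) [CommRing R] [Nontrivial R] {m : ℕ} (a : Fin m → ℤ) (c : R) :
    (gP R a c).natDegree = m + 1 := by
  rw [gP, ← C_1, natDegree_sub_C, prodP_natDegree]

theorem gP_monic (R : Type*) [CommRing R] [Nontrivial R] {m : ℕ} (a : Fin m → ℤ) (c : R) :
    (gP R a c).Monic := by
  apply (prodP_monic R a c).sub_of_left
  rw [degree_eq_natDegree (prodP_monic R a c).ne_zero, prodP_natDegree, degree_one]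
  exact_mod_cast Nat.succ_pos m

theorem lemA {m : ℕ} (hm : 2 ≤ m) (p : ℕ) [hp : Fact p.Prime] (a : Fin m → ℤ)
    (u : ZMod p) (hu : (∏ i, (a i : ZMod p)) * u = (-1) ^ (m + 1))
    (hX : gP (ZMod p) a u = X ^ (m + 1))
    (hco : (∏ i, (a i : ZMod (p ^ 2))) ^ 2 +
      (∏ i, (X - C (a i : ZMod (p ^ 2)))).coeff 1 ≠ 0)
    (T : ℤ_[p]) (hT : ‖T‖ < (p : ℝ) ^ (-4 : ℤ)) (c : ℚ_[p])
    (hc : ((∏ i, a i : ℤ) : ℚ_[p]) * c = (-1) ^ m * ((T : ℚ_[p]) - 1)) :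
    ∃ (θ : ℚ_[p]) (f1 : ℚ_[p][X]), gP ℚ_[p] a c = (X - C θ) * f1 ∧ Irreducible f1 ∧
      f1.natDegree = m := by
  have hp1 : (1 : ℝ) < p := by exact_mod_cast hp.1.one_lt
  have hdvd : ∀ x : ℤ_[p], PadicInt.toZMod x = 0 ↔ (p : ℤ_[p]) ∣ x := by
    intro x
    rw [← RingHom.mem_ker, PadicInt.ker_toZMod, PadicInt.maximalIdeal_eq_span_p,
      Ideal.mem_span_singleton]
  have hdvd2 : ∀ x : ℤ_[p], ¬ (p : ℤ_[p]) ^ 2 ∣ x → (p : ℝ) ^ (-2 : ℤ) < ‖x‖ := by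
    intro x hx
    by_contra! hcon
    exact hx (Ideal.mem_span_singleton.1 ((PadicInt.norm_le_pow_iff_mem_span_pow x 2).1
      (by simpa using hcon)))
  have hA0 : (∏ i, (a i : ZMod p)) ≠ 0 := by
    intro h
    rw [h, zero_mul] at hu
    exact (pow_ne_zero (m + 1) (neg_ne_zero.2 one_ne_zero)) hu.symm
  have hAu : IsUnit ((∏ i, a i : ℤ) : ℤ_[p]) := by
    by_contra h
    have h2 : ((∏ i, a i : ℤ) : ℤ_[p]) ∈ IsLocalRing.maximalIdeal ℤ_[p] := h
    rw [← PadicInt.ker_toZMod, RingHom.mem_ker] at h2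
    apply hA0
    simpa using h2
  obtain ⟨B, hB⟩ := hAu.exists_right_inv
  set c' : ℤ_[p] := B * ((-1) ^ m * (T - 1)) with hc'
  have hAc' : ((∏ i, a i : ℤ) : ℤ_[p]) * c' = (-1) ^ m * (T - 1) := by
    rw [hc', ← mul_assoc, hB, one_mul]
  have hcc : c = algebraMap ℤ_[p] ℚ_[p] c' := by
    have hne : ((∏ i, a i : ℤ) : ℚ_[p]) ≠ 0 := by
      intro h0
      rw [Int.cast_eq_zero] at h0
      rw [h0] at hAu
      simp at hAu
    apply mul_left_cancel₀ hne
    rw [hc]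
    have := congrArg (algebraMap ℤ_[p] ℚ_[p]) hAc'
    rw [map_mul, map_intCast] at this
    rw [this]
    simp
  have hpT2 : (p : ℤ_[p]) ^ 2 ∣ T := by
    by_contra h
    have h1 := hdvd2 T h
    have h2 : (p : ℝ) ^ (-4 : ℤ) ≤ (p : ℝ) ^ (-2 : ℤ) := zpow_le_zpow_right₀ hp1.le (by norm_num)
    linarith
  have hpT : (p : ℤ_[p]) ∣ T := (dvd_pow_self _ two_ne_zero).trans hpT2
  have hcu : PadicInt.toZMod c' = u := by
    apply mul_left_cancel₀ hA0
    rw [hu]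
    have := congrArg PadicInt.toZMod hAc'
    simp only [map_mul, map_intCast, map_pow, map_neg, map_one, map_sub, (hdvd T).2 hpT] at this
    push_cast at this
    rw [this]; ring
  set F := gP ℤ_[p] a c' with hF
  have hFmap : F.map PadicInt.toZMod = X ^ (m + 1) := by rw [hF, gP_map, hcu, hX]
  have hF0 : F.coeff 0 = -T := by
    rw [coeff_zero_eq_eval_zero, hF, gP]
    simp only [eval_sub, eval_mul, eval_prod, eval_X, eval_C, eval_one, zero_sub]
    rw [Finset.prod_neg]
    simp only [Finset.card_univ, Fintype.card_fin]
    push_cast at hAc'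
    have h1 : ((-1 : ℤ_[p]) ^ m) * (-1) ^ m = 1 := by rw [← mul_pow]; simp
    linear_combination (-(-1) ^ m) * hAc' - (T - 1) * h1
  have hF1 : ((∏ i, a i : ℤ) : ℤ_[p]) * F.coeff 1 = (-1) ^ m *
      (((∏ i, a i : ℤ) : ℤ_[p]) ^ 2 + (∏ i, (X - C ((a i : ℤ) : ℤ_[p]))).coeff 1
        - T * (∏ i, (X - C ((a i : ℤ) : ℤ_[p]))).coeff 1) := by
    rw [hF, gP, coeff_sub]
    have e0 : (∏ i, (X - C ((a i : ℤ) : ℤ_[p]))).coeff 0 = (-1) ^ m * ((∏ i, a i : ℤ) : ℤ_[p]) := by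
      rw [coeff_zero_eq_eval_zero]
      simp only [eval_sub, eval_prod, eval_X, eval_C, zero_sub]
      rw [Finset.prod_neg]
      simp
    have e1 : ((∏ i, (X - C ((a i : ℤ) : ℤ_[p]))) * (X - C c')).coeff 1 =
        (∏ i, (X - C ((a i : ℤ) : ℤ_[p]))).coeff 0 -
          (∏ i, (X - C ((a i : ℤ) : ℤ_[p]))).coeff 1 * c' := by
      rw [mul_sub, coeff_sub, coeff_mul_C, coeff_mul_X]
    rw [e1, e0, coeff_one]
    simp only [one_ne_zero, if_false]
    linear_combination -(∏ i, (X - C ((a i : ℤ) : ℤ_[p]))).coeff 1 * hAc'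
  have hd2 : ¬ (p : ℤ_[p]) ^ 2 ∣ F.coeff 1 := by
    intro h
    have h1 : (p : ℤ_[p]) ^ 2 ∣ (-1) ^ m * (((∏ i, a i : ℤ) : ℤ_[p]) * F.coeff 1)  :=
      Dvd.dvd.mul_left (Dvd.dvd.mul_left h _) _
    have h1' : ((-1 : ℤ_[p]) ^ m) * (-1) ^ m = 1 := by rw [← mul_pow]; simp
    rw [hF1, ← mul_assoc, h1', one_mul] at h1
    rw [dvd_sub_left (Dvd.dvd.mul_right hpT2 _)] at h1
    apply hco
    have h3 : PadicInt.toZModPow 2 (((∏ i, a i : ℤ) : ℤ_[p]) ^ 2 +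
        (∏ i, (X - C ((a i : ℤ) : ℤ_[p]))).coeff 1) = 0 := by
      rw [← RingHom.mem_ker, PadicInt.ker_toZModPow, Ideal.mem_span_singleton]
      exact h1
    rw [map_add, map_pow, map_intCast, ← coeff_map, Polynomial.map_prod] at h3
    simpa using h3
  have hd1 : (p : ℤ_[p]) ∣ F.coeff 1 := by
    rw [← hdvd, ← coeff_map, hFmap, coeff_X_pow, if_neg (by omega)]
  have hder : F.derivative.aeval (0 : ℤ_[p]) = F.coeff 1 := by
    simp [← coeff_zero_eq_aeval_zero, coeff_derivative]
  have hnorm : ‖F.aeval (0 : ℤ_[p])‖ < ‖F.derivative.aeval (0 : ℤ_[p])‖ ^ 2 := by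
    rw [hder, ← coeff_zero_eq_aeval_zero, hF0]
    simp only [norm_neg, Algebra.algebraMap_self, RingHom.id_apply]
    have h1 := hdvd2 _ hd2
    have h2 : (0 : ℝ) < (p : ℝ) ^ (-2 : ℤ) := by positivity
    have h3 : (p : ℝ) ^ (-4 : ℤ) = ((p : ℝ) ^ (-2 : ℤ)) ^ 2 := by
      rw [← zpow_natCast, ← zpow_mul]; norm_num
    rw [h3] at hT
    exact hT.trans (pow_lt_pow_left₀ h1 h2.le two_ne_zero)
  obtain ⟨θ, hθ, hθn, -, -⟩ := hensels_lemma hnorm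
  have hθp : (p : ℤ_[p]) ∣ θ := by
    rw [hder, sub_zero] at hθn
    exact PadicInt.norm_lt_one_iff_dvd θ |>.1 (hθn.trans_le (PadicInt.norm_le_one _))
  obtain ⟨f1, hf1⟩ := dvd_iff_isRoot.2 (show F.IsRoot θ by simpa [IsRoot] using hθ)
  have hf1m : f1.Monic := by
    refine (monic_X_sub_C θ).of_mul_monic_left ?_
    rw [← hf1]; exact gP_monic _ _ _
  have hf1d : f1.natDegree = m := by
    have := gP_natDegree ℤ_[p] a c'
    rw [← hF, hf1, (monic_X_sub_C θ).natDegree_mul hf1m, natDegree_X_sub_C] at this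
    omega
  have hf1map : f1.map PadicInt.toZMod = X ^ m := by
    have := hFmap
    rw [hf1, Polynomial.map_mul, Polynomial.map_sub, map_X, map_C, (hdvd θ).2 hθp, C_0, sub_zero,
      pow_succ'] at this
    exact mul_left_cancel₀ X_ne_zero this
  have hf1c : ∀ k, k < m → (p : ℤ_[p]) ∣ f1.coeff k := by
    intro k hk
    rw [← hdvd, ← coeff_map, hf1map, coeff_X_pow, if_neg (by omega)]
  have hprime : (Ideal.span {(p : ℤ_[p])}).IsPrime := by
    rw [← PadicInt.maximalIdeal_eq_span_p]; infer_instance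
  have hirr : Irreducible f1 := by
    have hE : f1.IsEisensteinAt (Ideal.span {(p : ℤ_[p])}) := by
      refine ⟨?_, ?_, ?_⟩
      · rw [hf1m.leadingCoeff]; exact fun h => hprime.ne_top ((Ideal.eq_top_iff_one _).2 h)
      · intro k hk
        rw [hf1d] at hk
        exact Ideal.mem_span_singleton.2 (hf1c k hk)
      · rw [Ideal.span_singleton_pow, Ideal.mem_span_singleton]
        intro h
        apply hd2
        have e1 : F.coeff 1 = f1.coeff 0 - θ * f1.coeff 1 := by
          rw [hf1, sub_mul, coeff_sub, coeff_C_mul, coeff_X_mul]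
        rw [e1]
        exact dvd_sub h (by rw [pow_two]; exact mul_dvd_mul hθp (hf1c 1 (by omega)))
    exact hE.irreducible hprime hf1m.isPrimitive (by omega)
  refine ⟨algebraMap _ _ θ, f1.map (algebraMap ℤ_[p] ℚ_[p]), ?_, ?_, ?_⟩
  · rw [hcc, ← gP_map, ← hF, hf1]; simp
  · exact (hf1m.irreducible_iff_irreducible_map_fraction_map).1 hirr
  · rw [hf1m.natDegree_map, hf1d]

theorem one_le_mprod (s : Multiset ℝ) (h : ∀ x ∈ s, 1 ≤ x) : 1 ≤ s.prod := by
  induction s using Multiset.induction with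
  | empty => simp
  | cons x s ih =>
    rw [Multiset.prod_cons]
    exact one_le_mul_of_one_le_of_one_le (h x (by simp)) (ih fun y hy => h y (by simp [hy]))

theorem lemB {m : ℕ} (q : ℕ) [hq : Fact q.Prime] (a : Fin m → ℤ)
    (i1 i2 : Fin m) (h12 : i1 ≠ i2) (ha12 : (q : ℤ) ∣ a i1 - a i2)
    (hsep : ∀ i j, i ≠ i1 → i ≠ i2 → i ≠ j → ¬ (q : ℤ) ∣ a i - a j)
    (hA1 : (q : ℤ) ∣ ∏ i, a i) (hA2 : ¬ (q : ℤ) ^ 2 ∣ ∏ i, a i)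
    (T : ℤ_[q]) (hT : ‖T‖ < 1) (c : ℚ_[q])
    (hc : ((∏ i, a i : ℤ) : ℚ_[q]) * c = (-1) ^ m * ((T : ℚ_[q]) - 1)) :
    (∃ s : Finset ℚ_[q], (∀ x ∈ s, (gP ℚ_[q] a c).eval x = 0) ∧ m + 1 ≤ s.card + 2) ∧
      ¬ (gP ℚ_[q] a c).Splits := by
  classical
  have hdn : ∀ x : ℤ_[q], (q : ℤ_[q]) ∣ x ↔ ‖x‖ < 1 := fun x =>
    (PadicInt.norm_lt_one_iff_dvd x).symm
  have hdz : ∀ x : ℤ, (q : ℤ) ∣ x ↔ ‖(x : ℤ_[q])‖ < 1 := fun x => by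
    rw [PadicInt.norm_int_lt_one_iff_dvd]
  have hnu : ∀ x : ℤ_[q], ‖x‖ < 1 → ‖1 - x‖ = 1 := by
    intro x hx
    have h1 : ‖(1 : ℤ_[q])‖ ≠ ‖x‖ := by rw [norm_one]; exact hx.ne'
    rw [sub_eq_add_neg, PadicInt.norm_add_eq_max_of_ne (by rwa [norm_neg])]
    rw [norm_neg, norm_one]; exact max_eq_left hx.le
  obtain ⟨w, hw⟩ : ∃ w, (1 - T) * w = 1 :=
    (PadicInt.isUnit_iff.2 (hnu T hT)).exists_right_inv
  have hwn : ‖w‖ = 1 := by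
    have := congrArg norm hw
    rw [norm_mul, hnu T hT, norm_one, one_mul] at this
    exact this
  set s : ℤ_[q] := -(-1) ^ m * ((∏ i, a i : ℤ) : ℤ_[q]) * w with hs
  have hsn : ‖s‖ = ‖((∏ i, a i : ℤ) : ℤ_[q])‖ := by
    rw [hs, norm_mul, norm_mul, hwn]; simp
  have hs1 : ‖s‖ < 1 := by rw [hsn, ← hdz]; exact hA1
  have hs2 : ¬ (q : ℤ_[q]) ^ 2 ∣ s := by
    intro h
    apply hA2
    have h1 := (PadicInt.norm_le_pow_iff_mem_span_pow s 2).2 (Ideal.mem_span_singleton.2 h)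
    rw [hsn, PadicInt.norm_int_le_pow_iff_dvd] at h1
    exact_mod_cast h1
  have hcp0 : ∀ b : Fin m → ℤ_[q], ((∏ i, b i : ℤ_[q]) : ℚ_[q]) = ∏ i, (b i : ℚ_[q]) := by
    intro b; exact map_prod (PadicInt.Coe.ringHom (p := q)) b Finset.univ
  have hsc : (s : ℚ_[q]) * c = 1 := by
    have h1 : ((-1 : ℚ_[q]) ^ m) * (-1) ^ m = 1 := by rw [← mul_pow]; simp
    have h2 : (1 - (T : ℚ_[q])) * (w : ℚ_[q]) = 1 := by exact_mod_cast congrArg (fun z : ℤ_[q] => (z : ℚ_[q])) hw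
    rw [hs]
    push_cast [hcp0]
    push_cast at hc
    linear_combination (-(-1) ^ m * (w : ℚ_[q])) * hc + ((1 - (T : ℚ_[q])) * (w : ℚ_[q])) * h1 + h2
  have hcp : ∀ b : Fin m → ℤ_[q], ((∏ i, b i : ℤ_[q]) : ℚ_[q]) = ∏ i, (b i : ℚ_[q]) := by
    intro b; exact map_prod (PadicInt.Coe.ringHom (p := q)) b Finset.univ
  have hs0 : (s : ℚ_[q]) ≠ 0 := left_ne_zero_of_mul_eq_one hsc
  have hev : ∀ x : ℚ_[q], (gP ℚ_[q] a c).eval x = (∏ i, (x - a i)) * (x - c) - 1 := by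
    intro x; simp [gP, eval_prod]
  -- the equation for integral roots
  have hint : ∀ x : ℤ_[q], (gP ℚ_[q] a c).eval (x : ℚ_[q]) = 0 ↔
      (∏ i, (x - a i)) * (1 - s * x) + s = 0 := by
    intro x
    have h0 : ∀ y : ℤ_[q], y = 0 ↔ (y : ℚ_[q]) = 0 := fun y => by simp
    rw [hev, h0]
    push_cast [hcp]
    rw [← mul_right_inj' (neg_ne_zero.2 hs0), mul_zero]
    have : -(s : ℚ_[q]) * ((∏ i, ((x : ℚ_[q]) - a i)) * (x - c) - 1) =
      (∏ i, ((x : ℚ_[q]) - a i)) * (1 - s * x) + s := by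
      linear_combination (∏ i, ((x : ℚ_[q]) - a i)) * hsc
    rw [this]
  -- finite roots
  have hfin : ∀ i, i ≠ i1 → i ≠ i2 → ∃ z : ℤ_[q], (gP ℚ_[q] a c).eval (z : ℚ_[q]) = 0 ∧
      ‖z - a i‖ < 1 := by
    intro i hi1 hi2
    let Q : ℤ_[q][X] := ∏ j ∈ Finset.univ.erase i, (X - C ((a j : ℤ) : ℤ_[q]))
    let F : ℤ_[q][X] := (X - C ((a i : ℤ) : ℤ_[q])) * (Q * (1 - C s * X)) + C s
    have hF : ∀ x, F.eval x = (∏ i, (x - a i)) * (1 - s * x) + s := by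
      intro x
      simp only [F, Q, eval_add, eval_mul, eval_sub, eval_X, eval_C, eval_one, eval_prod]
      rw [← Finset.mul_prod_erase Finset.univ (fun j => x - (a j : ℤ_[q])) (Finset.mem_univ i)]
      ring
    have hF' : F.derivative.eval ((a i : ℤ) : ℤ_[q]) =
        (∏ j ∈ Finset.univ.erase i, ((a i : ℤ_[q]) - a j)) * (1 - s * a i) := by
      simp only [F, derivative_add, derivative_mul, derivative_C, eval_add, eval_mul, eval_sub,
        eval_X, eval_C, sub_self, zero_mul, derivative_sub, derivative_X, eval_one, eval_zero]
      simp [Q, eval_prod]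
    have hn : ‖F.derivative.eval ((a i : ℤ) : ℤ_[q])‖ = 1 := by
      rw [hF', norm_mul, hnu, mul_one]
      · rw [norm_prod]
        apply Finset.prod_eq_one
        intro j hj
        have := hsep i j hi1 hi2 (Finset.ne_of_mem_erase hj).symm
        rw [hdz] at this
        push_cast at this
        exact le_antisymm (PadicInt.norm_le_one _) (not_lt.1 this)
      · rw [norm_mul]
        exact mul_lt_one_of_nonneg_of_lt_one_left (norm_nonneg _) hs1 (PadicInt.norm_le_one _)
    have hF0 : F.eval ((a i : ℤ) : ℤ_[q]) = s := by simp [F]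
    obtain ⟨z, hz, hz', -, -⟩ := hensels_lemma (F := F) (a := ((a i : ℤ) : ℤ_[q])) (by
      simp only [coe_aeval_eq_eval]
      rw [hn, hF0]; simpa using hs1)
    simp only [coe_aeval_eq_eval] at hz hz'
    rw [hn] at hz'
    refine ⟨z, ?_, hz'⟩
    rw [hint, ← hF, hz]
  -- the root near infinity
  have hinf : ∃ z : ℚ_[q], (gP ℚ_[q] a c).eval z = 0 ∧ 1 < ‖z‖ := by
    let H : ℤ_[q][X] := ∏ j, (1 + C s * (X - C ((a j : ℤ) : ℤ_[q])))
    let G : ℤ_[q][X] := X * H - C (s ^ m)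
    have hm0 : m ≠ 0 := by rintro rfl; exact i1.elim0
    have hn : ‖G.derivative.eval 0‖ = 1 := by
      simp only [G, derivative_sub, derivative_mul, derivative_C, eval_add, eval_mul, eval_sub,
        eval_X, zero_mul, derivative_X, eval_zero, eval_one, one_mul, add_zero, sub_zero]
      simp only [H, eval_prod, eval_add, eval_mul, eval_sub, eval_X, eval_C, eval_one, zero_sub]
      rw [norm_prod]
      apply Finset.prod_eq_one
      intro j hj
      rw [mul_neg, ← sub_eq_add_neg]
      apply hnu
      rw [norm_mul]
      exact mul_lt_one_of_nonneg_of_lt_one_left (norm_nonneg _) hs1 (PadicInt.norm_le_one _)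
    have hG0 : ‖G.eval 0‖ < 1 := by
      simp only [G, eval_sub, eval_mul, eval_X, zero_mul, eval_C, zero_sub, norm_neg]
      rw [norm_pow]
      exact pow_lt_one₀ (norm_nonneg _) hs1 hm0
    obtain ⟨z, hz, -, -, -⟩ := hensels_lemma (F := G) (a := (0 : ℤ_[q])) (by
      simp only [coe_aeval_eq_eval]
      rw [hn]; simpa using hG0)
    simp only [coe_aeval_eq_eval] at hz
    refine ⟨c + z, ?_, ?_⟩
    · rw [hev, ← mul_right_inj' (pow_ne_zero m hs0), mul_zero]
      have h1 : (s : ℚ_[q]) ^ m * ∏ i, (c + (z : ℚ_[q]) - a i) =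
          ∏ i, (1 + (s : ℚ_[q]) * ((z : ℚ_[q]) - a i)) := by
        have : (s : ℚ_[q]) ^ m = ∏ _i : Fin m, (s : ℚ_[q]) := by simp
        rw [this, ← Finset.prod_mul_distrib]
        apply Finset.prod_congr rfl
        intro i _
        linear_combination hsc
      have h2 : (z : ℚ_[q]) * (∏ i, (1 + (s : ℚ_[q]) * ((z : ℚ_[q]) - a i))) - (s : ℚ_[q]) ^ m = 0 := by
        have := congrArg (fun z : ℤ_[q] => (z : ℚ_[q])) hz
        simpa [G, H, eval_prod, hcp] using this
      linear_combination (z : ℚ_[q]) * h1 + h2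
    · have h1 : 1 < ‖c‖ := by
        have := congrArg norm hsc
        rw [norm_mul, norm_one] at this
        by_contra! hcon
        have h3 : ‖(s : ℚ_[q])‖ < 1 := hs1
        nlinarith [norm_nonneg c, norm_nonneg (s : ℚ_[q])]
      have h2 : ‖(z : ℚ_[q])‖ ≤ 1 := PadicInt.norm_le_one z
      rw [Padic.add_eq_max_of_ne (by linarith)]
      exact lt_max_of_lt_left h1
  obtain ⟨zi, hzi, hzin⟩ := hinf
  constructor
  · choose! z hz hzn using hfin
    refine ⟨insert zi (((Finset.univ.erase i1).erase i2).image fun i => ((z i : ℤ_[q]) : ℚ_[q])),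
      ?_, ?_⟩
    · intro x hx
      rw [Finset.mem_insert, Finset.mem_image] at hx
      rcases hx with rfl | ⟨i, hi, rfl⟩
      · exact hzi
      · simp only [Finset.mem_erase, Finset.mem_univ, and_true] at hi
        exact hz i hi.2 hi.1
    · rw [Finset.card_insert_of_notMem, Finset.card_image_of_injOn, Finset.card_erase_of_mem,
        Finset.card_erase_of_mem (Finset.mem_univ _)]
      · simp only [Finset.card_univ, Fintype.card_fin]
        omega
      · simp [h12.symm]
      · intro i hi j hj hij
        by_contra hne
        simp only [Finset.coe_erase, Set.mem_sdiff, Finset.coe_univ, Set.mem_univ, true_and,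
          Set.mem_singleton_iff] at hi hj
        have hij' : z i = z j := PadicInt.ext hij
        apply hsep i j hi.1 hi.2 hne
        rw [hdz, ← hdn]
        have e1 := (hdn _).2 (hzn i hi.1 hi.2)
        have e2 := (hdn _).2 (hzn j hj.1 hj.2)
        have := dvd_sub e2 e1
        rw [hij'] at this
        push_cast
        convert this using 1
        ring
      · intro h
        rw [Finset.mem_image] at h
        obtain ⟨i, -, rfl⟩ := h
        exact absurd (PadicInt.norm_le_one (z i)) (not_le.2 hzin)
  · intro hsp
    have hmon := gP_monic ℚ_[q] a c
    have hprod := hsp.eq_prod_roots_of_monic hmon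
    have hroot : ∀ r ∈ (gP ℚ_[q] a c).roots, 1 ≤ ‖((a i1 : ℤ) : ℚ_[q]) - r‖ := by
      intro r hr
      by_contra! hlt
      have hr0 : (gP ℚ_[q] a c).eval r = 0 := (mem_roots'.1 hr).2
      obtain ⟨d, hd⟩ : ∃ d : ℤ_[q], (d : ℚ_[q]) = ((a i1 : ℤ) : ℚ_[q]) - r := ⟨⟨_, hlt.le⟩, rfl⟩
      have hdd : (q : ℤ_[q]) ∣ d := by rw [hdn]; rw [← hd] at hlt; exact hlt
      have hrr : r = (((a i1 : ℤ) - d : ℤ_[q]) : ℚ_[q]) := by push_cast; rw [hd]; ring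
      rw [hrr, hint] at hr0
      set x : ℤ_[q] := (a i1 : ℤ) - d with hx
      have hx1 : (q : ℤ_[q]) ∣ x - a i1 := by rw [hx]; simpa using hdd
      have hx2 : (q : ℤ_[q]) ∣ x - a i2 := by
        have h1 : (q : ℤ_[q]) ∣ ((a i1 - a i2 : ℤ) : ℤ_[q]) := by
          rw [hdn, ← hdz]; exact ha12
        have := dvd_add hx1 h1
        push_cast at this
        simpa using this
      apply hs2
      have h3 : (q : ℤ_[q]) ^ 2 ∣ ∏ i, (x - a i) := by
        rw [← Finset.mul_prod_erase Finset.univ _ (Finset.mem_univ i1),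
          ← Finset.mul_prod_erase (Finset.univ.erase i1) _ (a := i2) (by simp [h12.symm]), pow_two]
        exact mul_dvd_mul hx1 (Dvd.dvd.mul_right hx2 _)
      have : s = -((∏ i, (x - a i)) * (1 - s * x)) := by linear_combination hr0
      rw [this, dvd_neg]
      exact Dvd.dvd.mul_right h3 _
    have he : (gP ℚ_[q] a c).eval ((a i1 : ℤ) : ℚ_[q]) = -1 := by
      rw [hev, Finset.prod_eq_zero (Finset.mem_univ i1) (sub_self _)]; simp
    have hmem : zi ∈ (gP ℚ_[q] a c).roots := (mem_roots hmon.ne_zero).2 hzi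
    obtain ⟨R, hR⟩ := Multiset.exists_cons_of_mem hmem
    rw [hprod, eval_multiset_prod, hR] at he
    have hn := congrArg norm he
    simp only [Multiset.map_cons, Multiset.prod_cons, norm_mul, eval_sub, eval_X, eval_C, norm_neg,
      norm_one, Multiset.map_map] at hn
    have h1 : ‖(Multiset.map ((fun p => eval ((a i1 : ℤ) : ℚ_[q]) p) ∘ fun r => X - C r) R).prod‖
        = (R.map fun r => ‖((a i1 : ℤ) : ℚ_[q]) - r‖).prod := by
      rw [← normHom_apply, map_multiset_prod, Multiset.map_map]
      congr 1
      apply Multiset.map_congr rfl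
      intro r _
      simp
    have h2 : 1 ≤ (R.map fun r => ‖((a i1 : ℤ) : ℚ_[q]) - r‖).prod := by
      apply one_le_mprod
      intro x hx
      obtain ⟨r, hr, rfl⟩ := Multiset.mem_map.1 hx
      exact hroot r (by rw [hR]; simp [hr])
    rw [h1] at hn
    have h3 : 1 < ‖((a i1 : ℤ) : ℚ_[q]) - zi‖ := by
      have h4 : ‖((a i1 : ℤ) : ℚ_[q])‖ ≤ 1 := Padic.norm_int_le_one _
      rw [sub_eq_add_neg, Padic.add_eq_max_of_ne (by rw [norm_neg]; linarith), norm_neg]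
      exact lt_max_of_lt_right hzin
    nlinarith

theorem lemE (m : ℕ) : ∃ (p : ℕ) (_ : Fact p.Prime) (b : Fin m → ℕ) (u : ZMod p),
    (∏ i, (b i : ZMod p)) * u = (-1) ^ (m + 1) ∧
    (∏ i, (X - C (b i : ZMod p))) * (X - C u) - 1 = X ^ (m + 1) ∧
    (∏ i, (b i : ZMod (p ^ 2))) ^ 2 + (∏ i, (X - C (b i : ZMod (p ^ 2)))).coeff 1 ≠ 0 := by
  obtain ⟨p, hp, hpm, hmod⟩ := Nat.exists_prime_gt_modEq_one (k := 2 * (m + 1)) (m + 1) (by omega)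
  haveI : Fact p.Prime := ⟨hp⟩
  -- splitting of X ^ n + 1
  have hsp : (X ^ (m + 1) + 1 : (ZMod p)[X]).Splits := by
    have h1 : (X ^ p - X : (ZMod p)[X]).Splits := by
      have := FiniteField.splits_X_pow_card_sub_X (K := ZMod p) p
      simpa using this
    have hne : (X ^ p - X : (ZMod p)[X]) ≠ 0 := FiniteField.X_pow_card_sub_X_ne_zero _ hp.one_lt
    refine h1.of_dvd hne ?_
    have hd : 2 * (m + 1) ∣ p - 1 := (Nat.modEq_iff_dvd' hp.one_lt.le).1 hmod.symm
    obtain ⟨k, hk⟩ := hd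
    have e1 : (X ^ p - X : (ZMod p)[X]) = X * ((X ^ (2 * (m + 1))) ^ k - 1 ^ k) := by
      rw [one_pow, ← pow_mul, ← hk, mul_sub, ← pow_succ', Nat.sub_add_cancel hp.one_lt.le, mul_one]
    rw [e1]
    apply Dvd.dvd.mul_left
    refine dvd_trans ?_ (sub_dvd_pow_sub_pow _ _ k)
    exact ⟨X ^ (m + 1) - 1, by ring⟩
  have hmon : (X ^ (m + 1) + 1 : (ZMod p)[X]).Monic := monic_X_pow_add_C 1 (by omega)
  have hcard : (X ^ (m + 1) + 1 : (ZMod p)[X]).roots.card = m + 1 := by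
    rw [splits_iff_card_roots.1 hsp]
    exact natDegree_X_pow_add_C (r := (1 : ZMod p))
  obtain ⟨r, hr⟩ : ∃ r : Fin (m + 1) → ZMod p,
      (X ^ (m + 1) + 1 : (ZMod p)[X]) = ∏ i, (X - C (r i)) := by
    have h1 := hsp.eq_prod_roots_of_monic hmon
    generalize (X ^ (m + 1) + 1 : (ZMod p)[X]).roots = R at h1 hcard
    induction R using Quotient.inductionOn with
    | h l =>
      have hl : l.length = m + 1 := by simpa using hcard
      refine ⟨fun i => l.get (Fin.cast hl.symm i), ?_⟩
      rw [h1]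
      simp only [Multiset.quot_mk_to_coe, Multiset.map_coe, Multiset.prod_coe]
      rw [← Fin.prod_univ_getElem (l.map fun a => X - C a)]
      refine Fintype.prod_equiv (finCongr (by simpa using hl)) _ _ ?_
      intro i
      simp
  rw [Fin.prod_univ_succ] at hr
  let b0 : Fin m → ℕ := fun i => (r i.succ).val
  have hb0 : ∀ i, (b0 i : ZMod p) = r i.succ := fun i => by simp [b0]
  have hprod : (∏ i : Fin m, r i.succ) * r 0 = (-1) ^ (m + 1) := by
    have h1 := congrArg (eval 0) hr
    simp only [eval_add, eval_pow, eval_X, eval_one, eval_mul, eval_sub, eval_C, eval_prod,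
      zero_sub, zero_pow (Nat.succ_ne_zero m), zero_add, Finset.prod_neg] at h1
    simp only [Finset.card_univ, Fintype.card_fin] at h1
    have h2 : ((-1 : ZMod p) ^ m) * (-1) ^ m = 1 := by rw [← mul_pow]; simp
    rw [pow_succ]
    linear_combination ((-1) ^ m) * h1 - ((∏ i : Fin m, r i.succ) * r 0) * h2
  have hpoly : (∏ i : Fin m, (X - C (r i.succ))) * (X - C (r 0)) - 1 = X ^ (m + 1) := by
    rw [mul_comm, ← hr]; ring
  have hA0 : ¬ (p : ℤ) ∣ ∏ i, (b0 i : ℤ) := by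
    intro h
    rw [← ZMod.intCast_zmod_eq_zero_iff_dvd] at h
    push_cast at h
    simp only [hb0] at h
    rw [h, zero_mul] at hprod
    exact (pow_ne_zero (m + 1) (neg_ne_zero.2 one_ne_zero)) hprod.symm
  have hconv : ∀ b : Fin m → ℕ,
      (∏ i, (b i : ZMod (p ^ 2))) ^ 2 + (∏ i, (X - C (b i : ZMod (p ^ 2)))).coeff 1 = 0 →
      (p : ℤ) ^ 2 ∣ (∏ i, (b i : ℤ)) ^ 2 + (∏ i, (X - C (b i : ℤ))).coeff 1 := by
    intro b hb
    have h1 : (((∏ i, (b i : ℤ)) ^ 2 + (∏ i, (X - C (b i : ℤ))).coeff 1 : ℤ) : ZMod (p ^ 2)) = 0 := by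
      rw [← hb]
      push_cast
      congr 1
      have := coeff_map (Int.castRingHom (ZMod (p ^ 2))) (p := ∏ i, (X - C (b i : ℤ))) 1
      rw [eq_intCast] at this
      rw [← this, Polynomial.map_prod]
      simp
    rw [ZMod.intCast_zmod_eq_zero_iff_dvd] at h1
    exact_mod_cast h1
  by_cases hcase : (∏ i, (b0 i : ZMod (p ^ 2))) ^ 2 +
      (∏ i, (X - C (b0 i : ZMod (p ^ 2)))).coeff 1 = 0
  · refine ⟨p, this, fun i => (1 + p) * b0 i, r 0, ?_, ?_, ?_⟩
    · push_cast
      simp only [CharP.cast_eq_zero, add_zero, one_mul, hb0]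
      exact hprod
    · push_cast
      simp only [CharP.cast_eq_zero, add_zero, one_mul, hb0]
      exact hpoly
    · intro hcon
      have h1 := hconv _ hcase
      have h2 := hconv _ hcon
      have hA' : (∏ i, (((1 + p) * b0 i : ℕ) : ℤ)) = (1 + p : ℤ) ^ m * ∏ i, (b0 i : ℤ) := by
        push_cast
        rw [Finset.prod_mul_distrib]; simp
      have he' : (∏ i, (X - C (((1 + p) * b0 i : ℕ) : ℤ))).coeff 1 * (1 + p : ℤ) =
          (1 + p : ℤ) ^ m * (∏ i, (X - C (b0 i : ℤ))).coeff 1 := by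
        have e1 : (∏ i, (X - C (((1 + p) * b0 i : ℕ) : ℤ))).comp (C (1 + p : ℤ) * X) =
            C ((1 + p : ℤ) ^ m) * ∏ i, (X - C (b0 i : ℤ)) := by
          have : (C ((1 + p : ℤ) ^ m) : ℤ[X]) = ∏ _i : Fin m, C (1 + p : ℤ) := by simp
          rw [this, ← Finset.prod_mul_distrib, prod_comp]
          apply Finset.prod_congr rfl
          intro i _
          rw [sub_comp, X_comp, C_comp, mul_sub, ← C_mul]
          push_cast
          rfl
        have e2 := congrArg (fun P => coeff P 1) e1
        simp only [comp_C_mul_X_coeff, coeff_C_mul, pow_one] at e2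
        exact e2
      rw [hA'] at h2
      set A := ∏ i, (b0 i : ℤ)
      set e := (∏ i, (X - C (b0 i : ℤ))).coeff 1
      set e' := (∏ i, (X - C (((1 + p) * b0 i : ℕ) : ℤ))).coeff 1
      have hpp : Prime (p : ℤ) := Nat.prime_iff_prime_int.1 hp
      have hl : ¬ (p : ℤ) ∣ 1 + p := by
        rw [dvd_add_left (dvd_refl _)]
        exact hpp.not_dvd_one
      have h3 : (p : ℤ) ^ 2 ∣ (1 + p : ℤ) ^ m * A ^ 2 * ((1 + p : ℤ) ^ (m + 1) - 1) := by
        have h4 := dvd_sub (Dvd.dvd.mul_right h2 (1 + p : ℤ)) (Dvd.dvd.mul_left h1 ((1 + p : ℤ) ^ m))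
        have e3 : (1 + p : ℤ) ^ m * A ^ 2 * ((1 + p : ℤ) ^ (m + 1) - 1) =
            (((1 + p : ℤ) ^ m * A) ^ 2 + e') * (1 + p : ℤ) - (1 + p : ℤ) ^ m * (A ^ 2 + e) := by
          linear_combination -he'
        rw [e3]; exact h4
      have hcop : IsCoprime ((p : ℤ) ^ 2) ((1 + p : ℤ) ^ m * A ^ 2) := by
        apply IsCoprime.pow_left
        apply IsCoprime.mul_right
        · exact IsCoprime.pow_right ((Prime.coprime_iff_not_dvd hpp).2 hl)
        · exact IsCoprime.pow_right ((Prime.coprime_iff_not_dvd hpp).2 hA0)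
      have h5 := hcop.dvd_of_dvd_mul_left h3
      obtain ⟨k, hk⟩ := powAddExpansion (1 : ℤ) (p : ℤ) (m + 1)
      rw [hk] at h5
      have h6 : (p : ℤ) ^ 2 ∣ p * ((m + 1 : ℕ) : ℤ) := by
        have := dvd_sub h5 (Dvd.intro_left k rfl : (p : ℤ) ^ 2 ∣ k * p ^ 2)
        have e4 : (p : ℤ) * ((m + 1 : ℕ) : ℤ) =
            1 ^ (m + 1) + ((m + 1 : ℕ) : ℤ) * 1 ^ (m + 1 - 1) * p + k * p ^ 2 - 1 - k * p ^ 2 := by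
          rw [one_pow, one_pow]; ring
        rw [e4]; exact this
      rw [pow_two] at h6
      have h7 := Int.natCast_dvd_natCast.1 ((mul_dvd_mul_iff_left hpp.ne_zero).1 h6)
      exact absurd (Nat.le_of_dvd (by omega) h7) (by omega)
  · refine ⟨p, this, b0, r 0, ?_, ?_, hcase⟩
    · simp only [hb0]; exact hprod
    · simp only [hb0]; exact hpoly

theorem lemF (m : ℕ) : ∃ (a : Fin m → ℤ), Function.Injective a ∧ (∀ i, a i ≠ 0) ∧
    (∃ (p : ℕ) (_ : Fact p.Prime) (u : ZMod p),
    (∏ i, (a i : ZMod p)) * u = (-1) ^ (m + 1) ∧ gP (ZMod p) a u = X ^ (m + 1) ∧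
    (∏ i, (a i : ZMod (p ^ 2))) ^ 2 + (∏ i, (X - C (a i : ZMod (p ^ 2)))).coeff 1 ≠ 0) ∧
    (3 ≤ m → ∃ (q : ℕ) (_ : Fact q.Prime) (i1 i2 : Fin m), i1 ≠ i2 ∧ (q : ℤ) ∣ a i1 - a i2 ∧
    (∀ i j, i ≠ i1 → i ≠ i2 → i ≠ j → ¬ (q : ℤ) ∣ a i - a j) ∧
    (q : ℤ) ∣ ∏ i, a i ∧ ¬ (q : ℤ) ^ 2 ∣ ∏ i, a i) := by
  obtain ⟨p, hp, b, u, hu, hX, hco⟩ := lemE m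
  obtain ⟨q, hqm, hq⟩ := Nat.exists_infinite_primes (p + m + 1)
  have hpq : (p ^ 2).Coprime (q ^ 2) := by
    apply Nat.Coprime.pow
    exact (Nat.coprime_primes hp.1 hq).2 (by omega)
  let d : Fin m → ℕ := fun i => if i.1 = 0 then q else if i.1 = 2 then 1 else i.1
  let e : Fin m → ℕ := fun i => if i.1 = 0 then 0 else if i.1 = 2 then 1 else i.1
  let z : Fin m → ℕ := fun i => Nat.chineseRemainder hpq (b i) (d i)
  have hz1 : ∀ i, z i ≡ b i [MOD p ^ 2] := fun i => (Nat.chineseRemainder hpq (b i) (d i)).2.1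
  have hz2 : ∀ i, z i ≡ d i [MOD q ^ 2] := fun i => (Nat.chineseRemainder hpq (b i) (d i)).2.2
  have hzl : ∀ i, z i < p ^ 2 * q ^ 2 := fun i =>
    Nat.chineseRemainder_lt_mul hpq _ _ (pow_ne_zero _ hp.1.ne_zero) (pow_ne_zero _ hq.ne_zero)
  let y : Fin m → ℕ := fun i => z i + (p ^ 2 * q ^ 2) * (i.1 + 1)
  have hy1 : ∀ i, y i ≡ b i [MOD p ^ 2] := fun i => by
    have : (p ^ 2 * q ^ 2) * (i.1 + 1) ≡ 0 [MOD p ^ 2] :=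
      (Nat.modEq_zero_iff_dvd).2 ⟨q ^ 2 * (i.1 + 1), by ring⟩
    simpa using (hz1 i).add this
  have hy2 : ∀ i, y i ≡ d i [MOD q ^ 2] := fun i => by
    have : (p ^ 2 * q ^ 2) * (i.1 + 1) ≡ 0 [MOD q ^ 2] :=
      (Nat.modEq_zero_iff_dvd).2 ⟨p ^ 2 * (i.1 + 1), by ring⟩
    simpa using (hz2 i).add this
  have hyc2 : ∀ i, (((y i : ℕ) : ℤ) : ZMod (p ^ 2)) = (b i : ZMod (p ^ 2)) := fun i => by
    rw [Int.cast_natCast]; exact (ZMod.natCast_eq_natCast_iff _ _ _).2 (hy1 i)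
  have hyc1 : ∀ i, (((y i : ℕ) : ℤ) : ZMod p) = (b i : ZMod p) := fun i => by
    rw [Int.cast_natCast]
    exact (ZMod.natCast_eq_natCast_iff _ _ _).2 ((hy1 i).of_dvd (dvd_pow_self _ two_ne_zero))
  have hye : ∀ i, y i ≡ e i [MOD q] := fun i => by
    refine ((hy2 i).of_dvd (dvd_pow_self _ two_ne_zero)).trans ?_
    simp only [d, e]
    split_ifs
    · exact (Nat.modEq_zero_iff_dvd).2 dvd_rfl
    · rfl
    · rfl
  have helt : ∀ i, e i < q := fun i => by
    have := i.2
    have := hp.1.one_lt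
    simp only [e]; split_ifs <;> omega
  have hdiff : ∀ i j, (q : ℤ) ∣ (y i : ℤ) - y j ↔ e i = e j := by
    intro i j
    rw [← Nat.modEq_iff_dvd]
    constructor
    · intro h
      have h2 := ((hye j).symm.trans h).trans (hye i)
      exact (Nat.ModEq.eq_of_lt_of_lt h2 (helt j) (helt i)).symm
    · intro h
      exact (hye j).trans (h ▸ (hye i).symm)
  have hN : 0 < p ^ 2 * q ^ 2 := by have := hp.1.pos; have := hq.pos; positivity
  have hqq : Prime (q : ℤ) := Nat.prime_iff_prime_int.1 hq
  refine ⟨fun i => (y i : ℤ), ?_, ?_, ⟨p, hp, u, ?_, ?_, ?_⟩, ?_⟩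
  · intro i j hij
    have hij : y i = y j := Nat.cast_injective (R := ℤ) hij
    have h1 := hzl i
    have h2 := hzl j
    simp only [y] at hij
    apply Fin.ext
    rcases lt_trichotomy i.1 j.1 with h | h | h
    · nlinarith
    · exact h
    · nlinarith
  · intro i
    have : 0 < y i := by simp only [y]; positivity
    show ((y i : ℕ) : ℤ) ≠ 0
    exact Nat.cast_ne_zero.2 this.ne'
  · simp only [hyc1]; exact hu
  · simp only [gP, hyc1]; exact hX
  · simp only [hyc2]; exact hco
  · intro hm
    have h0e : ∀ i : Fin m, e i = 0 → i = ⟨0, by omega⟩ := by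
      intro i hi
      apply Fin.ext
      simp only [e] at hi
      split_ifs at hi <;> simp_all
    have hy0 : (y ⟨0, by omega⟩) ≡ q [MOD q ^ 2] := by simpa [d] using hy2 ⟨0, by omega⟩
    have hq0 : q ∣ y ⟨0, by omega⟩ :=
      (Nat.modEq_zero_iff_dvd).1 (by simpa [e] using hye ⟨0, by omega⟩)
    have hq0' : ¬ q ^ 2 ∣ y ⟨0, by omega⟩ := by
      intro h
      have h1 : q ^ 2 ∣ q := (hy0.dvd_iff dvd_rfl).1 h
      have := Nat.le_of_dvd hq.pos h1
      nlinarith [hq.one_lt]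
    refine ⟨q, ⟨hq⟩, ⟨1, by omega⟩, ⟨2, by omega⟩, by simp, ?_, ?_, ?_, ?_⟩
    · rw [hdiff]; simp [e]
    · intro i j hi1 hi2 hij
      rw [hdiff]
      intro h
      apply hij
      apply Fin.ext
      have hi1' : i.1 ≠ 1 := fun h => hi1 (Fin.ext h)
      have hi2' : i.1 ≠ 2 := fun h => hi2 (Fin.ext h)
      simp only [e] at h
      split_ifs at h <;> omega
    · exact (Int.natCast_dvd_natCast.2 hq0).trans
        (Finset.dvd_prod_of_mem (fun i => (y i : ℤ)) (Finset.mem_univ _))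
    · intro h
      rw [← Finset.mul_prod_erase Finset.univ _ (Finset.mem_univ (⟨0, by omega⟩ : Fin m))] at h
      have hcop : IsCoprime ((q : ℤ) ^ 2)
          (∏ i ∈ Finset.univ.erase (⟨0, by omega⟩ : Fin m), (y i : ℤ)) := by
        apply IsCoprime.pow_left
        rw [Prime.coprime_iff_not_dvd hqq, hqq.dvd_finsetProd_iff]
        rintro ⟨i, hi, hd⟩
        apply (Finset.mem_erase.1 hi).1
        apply h0e
        have h1 : q ∣ y i := Int.natCast_dvd_natCast.1 hd
        have h2 := (hye i).symm.trans ((Nat.modEq_zero_iff_dvd).2 h1)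
        exact Nat.ModEq.eq_of_lt_of_lt h2 (helt i) hq.pos
      have h3 := hcop.dvd_of_dvd_mul_right h
      exact hq0' (by exact_mod_cast h3)

theorem gal_transfer {K k : Type*} [Field K] [Field k] [Algebra K k] (f : K[X])
    [Fact ((f.map (algebraMap K (AlgebraicClosure k))).Splits)]
    (σ : Gal(AlgebraicClosure k/k)) :
    ∃ g : f.Gal, ∀ x : f.rootSet f.SplittingField,
      (Gal.rootsEquivRoots f (AlgebraicClosure k) (g • x) : AlgebraicClosure k) =
        σ (Gal.rootsEquivRoots f (AlgebraicClosure k) x) := by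
  refine ⟨Gal.restrict f (AlgebraicClosure k) (σ.restrictScalars K), fun x => ?_⟩
  have := Gal.restrict_smul (p := f) (σ.restrictScalars K)
    (Gal.rootsEquivRoots f (AlgebraicClosure k) x)
  rw [Gal.smul_def, Equiv.symm_apply_apply] at this
  simpa using this

theorem gal_stab {K k : Type*} [Field K] [Field k] [Algebra K k] [CharZero k] (f : K[X])
    (hf0 : f ≠ 0) (θ : k) (f1 : k[X]) (h : f.map (algebraMap K k) = (X - C θ) * f1)
    (hirr : Irreducible f1) :
    ∃ x0 : f.rootSet f.SplittingField, ∀ y z : f.rootSet f.SplittingField,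
      y ≠ x0 → z ≠ x0 → ∃ g : f.Gal, g • x0 = x0 ∧ g • y = z := by
  have : Fact ((f.map (algebraMap K (AlgebraicClosure k))).Splits) :=
    ⟨IsAlgClosed.splits _⟩
  have hmap : f.map (algebraMap K (AlgebraicClosure k)) =
      (X - C (algebraMap k (AlgebraicClosure k) θ)) * f1.map (algebraMap k _) := by
    rw [IsScalarTower.algebraMap_eq K k (AlgebraicClosure k), ← Polynomial.map_map, h]
    simp
  let e := Gal.rootsEquivRoots f (AlgebraicClosure k)
  have hroot : ∀ y : AlgebraicClosure k, aeval y f =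
      (y - algebraMap k (AlgebraicClosure k) θ) * aeval y f1 := by
    intro y
    rw [← eval_map_algebraMap f, hmap]; simp
  have hθ : algebraMap k (AlgebraicClosure k) θ ∈ f.rootSet (AlgebraicClosure k) := by
    rw [mem_rootSet]; exact ⟨hf0, by rw [hroot]; simp⟩
  refine ⟨e.symm ⟨_, hθ⟩, fun y z hy hz => ?_⟩
  have key : ∀ y : f.rootSet f.SplittingField, y ≠ e.symm ⟨_, hθ⟩ →
      aeval (e y : AlgebraicClosure k) f1 = 0 := by
    intro y hy
    have h1 := (mem_rootSet.1 (e y).2).2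
    rw [hroot, mul_eq_zero] at h1
    refine h1.resolve_left fun h2 => hy ?_
    rw [Equiv.eq_symm_apply]
    exact Subtype.ext (sub_eq_zero.1 h2)
  have hc : IsConjRoot k (e z : AlgebraicClosure k) (e y : AlgebraicClosure k) := by
    rw [IsConjRoot, ← minpoly.eq_of_irreducible hirr (key z hz),
      ← minpoly.eq_of_irreducible hirr (key y hy)]
  obtain ⟨σ, hσ⟩ := isConjRoot_iff_exists_algEquiv.1 hc
  obtain ⟨g, hg⟩ := gal_transfer f σ
  refine ⟨g, ?_, ?_⟩
  · apply e.injective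
    apply Subtype.ext
    rw [hg]; simp [e]
  · apply e.injective
    apply Subtype.ext
    rw [hg]; exact hσ

open Classical in
theorem gal_swap {K k : Type*} [Field K] [Field k] [Algebra K k] [CharZero k] (f : K[X])
    (hf0 : f ≠ 0) (hsep : f.Separable) (s : Finset k)
    (hs : ∀ x ∈ s, aeval x f = 0) (hcard : f.natDegree ≤ s.card + 2)
    (hns : ¬ (f.map (algebraMap K k)).Splits) :
    ∃ g : f.Gal, (MulAction.toPermHom f.Gal (f.rootSet f.SplittingField) g).IsSwap := by
  have : Fact ((f.map (algebraMap K (AlgebraicClosure k))).Splits) :=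
    ⟨IsAlgClosed.splits _⟩
  let e := Gal.rootsEquivRoots f (AlgebraicClosure k)
  obtain ⟨y, hy, hyk⟩ : ∃ y : AlgebraicClosure k, aeval y f = 0 ∧
      y ∉ (algebraMap k (AlgebraicClosure k)).range := by
    by_contra! hcon
    apply hns
    have h1 : ((f.map (algebraMap K k)).map (algebraMap k (AlgebraicClosure k))).Splits :=
      IsAlgClosed.splits _
    refine Splits.of_splits_map_of_injective
      (algebraMap k (AlgebraicClosure k)).injective h1 ?_
    · intro a ha
      have : aeval a f = 0 := by
        have := (mem_roots'.1 ha).2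
        rw [Polynomial.map_map, ← IsScalarTower.algebraMap_eq] at this
        rw [← eval_map_algebraMap]; exact this
      exact hcon a this
  have hσ : ∃ σ : Gal(AlgebraicClosure k/k), σ y ≠ y := by
    by_contra! hcon
    apply hyk
    have := (InfiniteGalois.mem_bot_iff_fixed (k := k) y).2 hcon
    rw [IntermediateField.mem_bot] at this
    simpa using this
  obtain ⟨σ, hσ⟩ := hσ
  obtain ⟨g, hg⟩ := gal_transfer f σ
  refine ⟨g, ?_⟩
  rw [← Equiv.Perm.card_support_eq_two]
  apply le_antisymm
  · let ι : s → f.rootSet f.SplittingField := fun x =>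
      e.symm ⟨algebraMap k (AlgebraicClosure k) x, by
        rw [mem_rootSet]; exact ⟨hf0, by rw [aeval_algebraMap_apply, hs x x.2, map_zero]⟩⟩
    have hι : Function.Injective ι := by
      intro a b hab
      have := e.symm.injective hab
      apply Subtype.ext
      exact (algebraMap k (AlgebraicClosure k)).injective (congrArg Subtype.val this)
    have hdisj : Disjoint ((MulAction.toPermHom f.Gal (f.rootSet f.SplittingField) g).support)
        (Finset.univ.image ι) := by
      rw [Finset.disjoint_left]
      intro x hx hx'
      simp only [Finset.mem_image, Finset.mem_univ, true_and] at hx'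
      obtain ⟨a, rfl⟩ := hx'
      rw [Equiv.Perm.mem_support] at hx
      apply hx
      apply e.injective
      apply Subtype.ext
      change ((e (g • ι a) : f.rootSet (AlgebraicClosure k)) : AlgebraicClosure k) = _
      rw [hg]
      simp [ι, e]
    have h1 := Finset.card_union_of_disjoint hdisj
    have h2 := Finset.card_le_univ ((MulAction.toPermHom f.Gal (f.rootSet f.SplittingField) g).support
       ∪ (Finset.univ.image ι))
    rw [h1, Finset.card_image_of_injective _ hι, card_rootSet_eq_natDegree hsep
      (SplittingField.splits f)] at h2
    simp only [Finset.card_univ, Fintype.card_coe] at h2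
    omega
  · apply Equiv.Perm.two_le_card_support_of_ne_one
    intro h1
    apply hσ
    have hy' : y ∈ f.rootSet (AlgebraicClosure k) := mem_rootSet.2 ⟨hf0, hy⟩
    have h2 := hg (e.symm ⟨y, hy'⟩)
    have h3 : g • (e.symm ⟨y, hy'⟩) = e.symm ⟨y, hy'⟩ :=
      congrArg (fun τ : Equiv.Perm _ => τ (e.symm ⟨y, hy'⟩)) h1
    rw [h3] at h2
    simpa [e] using h2.symm

open Classical in
theorem gal_final {K : Type*} [Field K] (f : K[X]) (n : ℕ)
    (hsep : f.Separable) (hdeg : f.natDegree = n)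
    (hnr : ∀ r : K, f.eval r ≠ 0)
    (hst : ∃ x0 : f.rootSet f.SplittingField, ∀ y z : f.rootSet f.SplittingField,
      y ≠ x0 → z ≠ x0 → ∃ g : f.Gal, g • x0 = x0 ∧ g • y = z)
    (hsw : ∃ g : f.Gal, (MulAction.toPermHom f.Gal (f.rootSet f.SplittingField) g).IsSwap) :
    Nonempty (f.Gal ≃* Equiv.Perm (Fin n)) := by
  obtain ⟨x0, hx0⟩ := hst
  obtain ⟨g0, hg0⟩ := hsw
  have : IsGalois K f.SplittingField := IsGalois.of_separable_splitting_field hsep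
  have hmove : ∃ g : f.Gal, g • x0 ≠ x0 := by
    by_contra! hcon
    have : (x0 : f.SplittingField) ∈ (⊥ : IntermediateField K f.SplittingField) := by
      rw [IsGalois.mem_bot_iff_fixed]
      intro g
      exact congrArg Subtype.val (hcon g)
    rw [IntermediateField.mem_bot] at this
    obtain ⟨r, hr⟩ := this
    apply hnr r
    have h1 := (mem_rootSet.1 x0.2).2
    rw [← hr, aeval_algebraMap_apply] at h1
    simpa using h1
  obtain ⟨g1, hg1⟩ := hmove
  have htrans : ∀ x : f.rootSet f.SplittingField, ∃ g : f.Gal, g • x = x0 := by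
    intro x
    by_cases hx : x = x0
    · exact ⟨1, by simp [hx]⟩
    · obtain ⟨g, -, hg⟩ := hx0 x (g1 • x0) hx hg1
      exact ⟨g1⁻¹ * g, by rw [mul_smul, hg, inv_smul_smul]⟩
  have h2 : MulAction.IsMultiplyPretransitive f.Gal (f.rootSet f.SplittingField) 2 := by
    rw [MulAction.is_two_pretransitive_iff]
    intro a b c d hab hcd
    obtain ⟨u, hu⟩ := htrans a
    obtain ⟨v, hv⟩ := htrans c
    obtain ⟨g, hg, hg'⟩ := hx0 (u • b) (v • d) (by rw [← hu]; simpa using hab.symm)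
      (by rw [← hv]; simpa using hcd.symm)
    refine ⟨v⁻¹ * g * u, ?_, ?_⟩
    · rw [mul_smul, mul_smul, hu, hg, ← hv, inv_smul_smul]
    · rw [mul_smul, mul_smul, hg', inv_smul_smul]
  have hprim := MulAction.isPreprimitive_of_is_two_pretransitive h2
  let F := MulAction.toPermHom f.Gal (f.rootSet f.SplittingField)
  have hprim' : MulAction.IsPreprimitive F.range (f.rootSet f.SplittingField) := by
    let φ : f.rootSet f.SplittingField →ₑ[F.rangeRestrict] f.rootSet f.SplittingField :=
      { toFun := id, map_smul' := fun g x => rfl }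
    exact MulAction.IsPreprimitive.of_surjective (f := φ) Function.surjective_id
  have htop : F.range = ⊤ :=
    Equiv.Perm.subgroup_eq_top_of_isPreprimitive_of_isSwap_mem hprim' _ hg0 ⟨g0, rfl⟩
  have hinj : Function.Injective F := by
    intro g h hgh
    apply Gal.ext
    intro x hx
    exact congrArg Subtype.val (congrArg (fun τ : Equiv.Perm _ => τ ⟨x, hx⟩) hgh)
  have hcard : Fintype.card (f.rootSet f.SplittingField) = n := by
    rw [card_rootSet_eq_natDegree hsep (SplittingField.splits f), hdeg]
  exact ⟨(MulEquiv.ofBijective F ⟨hinj, MonoidHom.range_eq_top.1 htop⟩).trans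
    (Equiv.permCongrHom (Fintype.equivFinOfCardEq hcard))⟩

theorem exists_embed (p : ℕ) [hp : Fact p.Prime] (ℓ : ℕ) (hℓ : 1 ≤ ℓ) :
    ∃ (φ : RatFunc ℚ →+* ℚ_[p]) (T : ℤ_[p]), φ (RatFunc.X ^ ℓ) = T ∧
      ‖T‖ < (p : ℝ) ^ (-4 : ℤ) := by
  have hp0 : (0 : ℝ) < p := by exact_mod_cast hp.1.pos
  have hcount : {x : ℚ_[p] | IsAlgebraic ℚ x}.Countable := Algebraic.countable ℚ ℚ_[p]
  have hdense := hcount.dense_compl ℚ_[p]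
  obtain ⟨t, ht1, ht2⟩ := hdense.exists_mem_open
    (Metric.isOpen_ball (x := (0 : ℚ_[p])) (ε := (p : ℝ) ^ (-4 : ℤ)))
    (Metric.nonempty_ball.2 (by positivity))
  have htr : Transcendental ℚ t := ht1
  have htn : ‖t‖ < (p : ℝ) ^ (-4 : ℤ) := by simpa using ht2
  have hp4 : (p : ℝ) ^ (-4 : ℤ) ≤ 1 :=
    zpow_le_one_of_nonpos₀ (by exact_mod_cast hp.1.one_lt.le) (by norm_num)
  have ht1 : ‖t‖ ≤ 1 := htn.le.trans hp4
  let φ : RatFunc ℚ →+* ℚ_[p] := RatFunc.liftRingHom (aeval t : ℚ[X] →ₐ[ℚ] ℚ_[p]).toRingHom (by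
    intro x hx
    rw [Submonoid.mem_comap]
    apply mem_nonZeroDivisors_of_ne_zero
    have := transcendental_iff_injective.1 htr
    intro h0
    apply nonZeroDivisors.ne_zero hx
    apply this
    rw [map_zero]; exact h0)
  have hφ : φ RatFunc.X = t := by
    simp only [φ]
    rw [← RatFunc.algebraMap_X]
    rw [RatFunc.liftRingHom_algebraMap]
    simp
  let t' : ℤ_[p] := ⟨t, ht1⟩
  refine ⟨φ, t' ^ ℓ, ?_, ?_⟩
  · rw [map_pow, hφ]; push_cast; rfl
  · rw [norm_pow]
    have h2 : ‖t'‖ = ‖t‖ := rfl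
    rw [h2]
    exact (pow_le_of_le_one (norm_nonneg _) ht1 (by omega)).trans_lt htn

theorem noroot {m : ℕ} (ℓ : ℕ) (hℓ : 1 ≤ ℓ) (hm : 1 ≤ m) (a : Fin m → ℤ) (ha : ∏ i, a i ≠ 0)
    (r : RatFunc ℚ) :
    (gP (RatFunc ℚ) a ((-1) ^ m * (RatFunc.X ^ ℓ - 1) / ((∏ i, a i : ℤ) : RatFunc ℚ))).eval r ≠ 0 := by
  intro h
  set A : ℤ := ∏ i, a i with hA
  let cp : ℚ[X] := C ((-1) ^ m / (A : ℚ)) * (X ^ ℓ - 1)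
  have hA' : (A : RatFunc ℚ) ≠ 0 := by exact_mod_cast ha
  have hc : (-1) ^ m * (RatFunc.X ^ ℓ - 1) / (A : RatFunc ℚ) = algebraMap ℚ[X] (RatFunc ℚ) cp := by
    simp only [cp, map_mul, map_sub, map_pow, RatFunc.algebraMap_X, map_one, RatFunc.algebraMap_C,
      map_div₀, map_neg, map_intCast]
    ring
  rw [hc, ← gP_map] at h
  have hint : IsIntegral ℚ[X] r := ⟨gP ℚ[X] a cp, gP_monic _ _ _, by rw [← eval_map]; exact h⟩
  obtain ⟨s, rfl⟩ := IsIntegrallyClosed.isIntegral_iff.1 hint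
  rw [eval_map_algebraMap, aeval_algebraMap_apply] at h
  have h0 : (gP ℚ[X] a cp).eval s = 0 := by
    apply FaithfulSMul.algebraMap_injective ℚ[X] (RatFunc ℚ)
    rw [map_zero, ← h]; simp
  simp only [gP, eval_sub, eval_mul, eval_prod, eval_X, eval_C, eval_one, sub_eq_zero] at h0
  have hu1 : IsUnit (∏ i, (s - ((a i : ℤ) : ℚ[X]))) := IsUnit.of_mul_eq_one _ h0
  have hu2 : IsUnit (s - cp) := IsUnit.of_mul_eq_one_right _ h0
  have hu3 : IsUnit (s - ((a ⟨0, hm⟩ : ℤ) : ℚ[X])) := by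
    exact isUnit_of_dvd_unit (Finset.dvd_prod_of_mem (fun i => s - ((a i : ℤ) : ℚ[X])) (Finset.mem_univ _)) hu1
  have hd1 : s.natDegree = 0 := by
    have := natDegree_eq_zero_of_isUnit hu3
    rw [← C_eq_intCast, natDegree_sub_C] at this
    exact this
  have hd2 := natDegree_eq_zero_of_isUnit hu2
  have hd3 : cp.natDegree = 0 := by
    have : cp = s - (s - cp) := by ring
    rw [this]
    have := natDegree_sub_le s (s - cp)
    omega
  have hd4 : cp.natDegree = ℓ := by
    simp only [cp]
    rw [natDegree_C_mul, ← C_1, natDegree_X_pow_sub_C]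
    have : (A : ℚ) ≠ 0 := by exact_mod_cast ha
    exact div_ne_zero (pow_ne_zero _ (by norm_num)) this
  omega

theorem sep_of_factor {k : Type*} [Field k] [CharZero k] (g : k[X]) (θ : k) (f1 : k[X])
    (h : g = (X - C θ) * f1) (hirr : Irreducible f1) (hd : 2 ≤ f1.natDegree) : g.Separable := by
  rw [h]
  refine (separable_X_sub_C).mul hirr.separable ?_
  rw [(irreducible_X_sub_C θ).coprime_iff_not_dvd, dvd_iff_isRoot]
  intro hr
  have h1 : f1.natDegree = 1 :=
    natDegree_eq_of_degree_eq_some (degree_eq_one_of_irreducible_of_root hirr hr)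
  omega

theorem main_aux (m ℓ : ℕ) (hm : 2 ≤ m) (hℓ : 1 ≤ ℓ) :
    ∃ a : Fin m → ℤ, Function.Injective a ∧ (∀ i, a i ≠ 0) ∧
      (gP (RatFunc ℚ) a
        ((-1) ^ m * (RatFunc.X ^ ℓ - 1) / ((∏ i, a i : ℤ) : RatFunc ℚ))).Separable ∧
      Nonempty ((gP (RatFunc ℚ) a
        ((-1) ^ m * (RatFunc.X ^ ℓ - 1) / ((∏ i, a i : ℤ) : RatFunc ℚ))).Gal ≃*
          Equiv.Perm (Fin (m + 1))) ∧
      (gP ℚ a ((-1) ^ m * ((0 : ℚ) ^ ℓ - 1) / ((∏ i, a i : ℤ) : ℚ))).Separable := by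
  obtain ⟨a, hinj, hne, ⟨p, hp, u, hu, hX, hco⟩, hq⟩ := lemF m
  have hA : ∏ i, a i ≠ 0 := Finset.prod_ne_zero_iff.2 fun i _ => hne i
  obtain ⟨φ, T, hφ, hT⟩ := exists_embed p ℓ hℓ
  set f := gP (RatFunc ℚ) a
    ((-1) ^ m * (RatFunc.X ^ ℓ - 1) / ((∏ i, a i : ℤ) : RatFunc ℚ)) with hf
  have hφc : ∀ (p : ℕ) [Fact p.Prime] (φ : RatFunc ℚ →+* ℚ_[p]) (T : ℤ_[p]),
      φ (RatFunc.X ^ ℓ) = T → ((∏ i, a i : ℤ) : ℚ_[p]) *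
      φ ((-1) ^ m * (RatFunc.X ^ ℓ - 1) / ((∏ i, a i : ℤ) : RatFunc ℚ)) =
        (-1) ^ m * ((T : ℚ_[p]) - 1) := by
    intro p _ φ T h
    have : ((∏ i, a i : ℤ) : ℚ_[p]) ≠ 0 := Int.cast_ne_zero.2 hA
    rw [map_div₀, map_mul, map_sub, h, map_intCast, mul_div_cancel₀ _ this]
    simp
  obtain ⟨θ, f1, hff, hirr, hd⟩ := lemA hm p a u hu hX hco T hT _ (hφc p φ T hφ)
  have hsep : f.Separable := by
    rw [← separable_map φ, hf, gP_map]
    exact sep_of_factor _ θ f1 hff hirr (by omega)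
  have hf0 : f ≠ 0 := (gP_monic _ _ _).ne_zero
  have hdeg : f.natDegree = m + 1 := gP_natDegree _ _ _
  refine ⟨a, hinj, hne, hsep, ?_, ?_⟩
  · apply gal_final f (m + 1) hsep hdeg
    · exact noroot ℓ hℓ (by omega) a hA
    · letI := φ.toAlgebra
      refine gal_stab f hf0 θ f1 ?_ hirr
      rw [← hff]; exact gP_map φ _ _
    · by_cases h3 : 3 ≤ m
      · obtain ⟨q, hqp, i1, i2, h12, ha12, hsp, hA1, hA2⟩ := hq h3
        obtain ⟨ψ, S, hψ, hS⟩ := exists_embed q ℓ hℓ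
        have hS1 : ‖S‖ < 1 := hS.trans_le
          (zpow_le_one_of_nonpos₀ (by exact_mod_cast hqp.1.one_lt.le) (by norm_num))
        obtain ⟨⟨s, hs, hsc⟩, hns⟩ := lemB q a i1 i2 h12 ha12 hsp hA1 hA2 S hS1 _ (hφc q ψ S hψ)
        letI := ψ.toAlgebra
        have hmap : f.map (algebraMap (RatFunc ℚ) ℚ_[q]) = _ := gP_map ψ _ _
        refine gal_swap f hf0 hsep s ?_ (by omega) ?_
        · intro x hx
          rw [← eval_map_algebraMap, hmap]
          exact hs x hx
        · rw [hmap]; exact hns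
      · letI := φ.toAlgebra
        have hmap : f.map (algebraMap (RatFunc ℚ) ℚ_[p]) = _ := gP_map φ _ _
        refine gal_swap f hf0 hsep {θ} ?_ (by simp; omega) ?_
        · intro x hx
          rw [Finset.mem_singleton] at hx
          rw [← eval_map_algebraMap, hmap, hff, hx]; simp
        · rw [hmap, hff]
          intro hsp
          have h1 : f1.Splits := hsp.of_dvd
            (mul_ne_zero (X_sub_C_ne_zero θ) hirr.ne_zero) (dvd_mul_left _ _)
          have := h1.natDegree_eq_one_of_irreducible hirr
          omega
  · rw [← separable_map (Rat.castHom ℚ_[p]), gP_map]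
    obtain ⟨θ, f1, hff, hirr, hd⟩ := lemA hm p a u hu hX hco 0
      (by rw [norm_zero]; have : (0 : ℝ) < p := by exact_mod_cast hp.1.pos
          positivity)
      (Rat.castHom ℚ_[p] ((-1) ^ m * ((0 : ℚ) ^ ℓ - 1) / ((∏ i, a i : ℤ) : ℚ))) (by
        have : ((∏ i, a i : ℤ) : ℚ_[p]) ≠ 0 := Int.cast_ne_zero.2 hA
        rw [map_div₀, map_mul, map_intCast, mul_div_cancel₀ _ this, zero_pow (by omega)]
        simp)
    exact sep_of_factor _ θ f1 hff hirr (by omega)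

/-- **Theorem 5.1.**  Let `n ≥ 3` and `ℓ ≥ 1`.  There exist pairwise distinct nonzero
integers `a_1,…,a_{n-1}` such that the polynomial `f(t,x)` is separable over `ℚ(t)`
with Galois group isomorphic to the symmetric group `S_n`, and `f(0,x) ∈ ℚ[x]` is
separable. -/
theorem main_poly_exists (n ℓ : ℕ) (hn : 3 ≤ n) (hℓ : 1 ≤ ℓ) :
    ∃ a : Fin (n - 1) → ℤ, Function.Injective a ∧ (∀ i, a i ≠ 0) ∧
      (mainPoly n ℓ a).Separable ∧
      Nonempty ((mainPoly n ℓ a).Gal ≃* Equiv.Perm (Fin n)) ∧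
      (mainPolyZero n ℓ a).Separable := by
  obtain ⟨m, rfl⟩ : ∃ m, n = m + 1 := ⟨n - 1, by omega⟩
  exact main_aux m ℓ (by omega) hℓ
end

section
/- Let K be a field of characteristic 0, let n ≥ 4 and ℓ ≥ 1 be integers, let α and γ be nonzero elements of K and β ∈ K. Let L = K(t_1,…,t_{n-1}, t) be the field of rational functions in n independent variables over K. Then the polynomial (x−t_1)⋯(x−t_{n-1})·(x − (α t^ℓ + β)/(t_1⋯t_{n-1})) − γ ∈ L[x] is separable and its Galois group over L is isomorphic to the symmetric group S_n. -/
open Polynomial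

/-- The polynomial `(x−t_1)⋯(x−t_{n-1})·(x − (α t^ℓ + β)/(t_1⋯t_{n-1})) − γ` over the
rational function field `L = K(t_1,…,t_{n-1},t)`; here the variables are indexed by
`Option (Fin (n-1))`, with `some i ↦ t_i` and `none ↦ t`. -/
noncomputable def auxPoly (K : Type*) [Field K] (n ℓ : ℕ) (α β γ : K) :
    Polynomial (FractionRing (MvPolynomial (Option (Fin (n - 1))) K)) :=
  (∏ i : Fin (n - 1), (X - C (algebraMap (MvPolynomial (Option (Fin (n - 1))) K)
      (FractionRing (MvPolynomial (Option (Fin (n - 1))) K)) (MvPolynomial.X (some i))))) *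
    (X - C ((algebraMap (MvPolynomial (Option (Fin (n - 1))) K)
        (FractionRing (MvPolynomial (Option (Fin (n - 1))) K)) (MvPolynomial.C α) *
        algebraMap (MvPolynomial (Option (Fin (n - 1))) K)
        (FractionRing (MvPolynomial (Option (Fin (n - 1))) K)) (MvPolynomial.X none) ^ ℓ +
        algebraMap (MvPolynomial (Option (Fin (n - 1))) K)
        (FractionRing (MvPolynomial (Option (Fin (n - 1))) K)) (MvPolynomial.C β)) /
      ∏ i : Fin (n - 1), algebraMap (MvPolynomial (Option (Fin (n - 1))) K)
        (FractionRing (MvPolynomial (Option (Fin (n - 1))) K)) (MvPolynomial.X (some i)))) -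
    C (algebraMap (MvPolynomial (Option (Fin (n - 1))) K)
      (FractionRing (MvPolynomial (Option (Fin (n - 1))) K)) (MvPolynomial.C γ))

lemma grp_aux4 : ∀ ρ : Equiv.Perm (Fin 4), Equiv.Perm.sign ρ ≠ 1 →
    ∃ (i : Fin 4) (j : Fin 4), i ≠ j ∧ ((ρ = Equiv.swap i j) ∨
     ∃ σ : Equiv.Perm (Fin 4), ∃ τ : Equiv.Perm (Fin 4),
      ρ * (σ * ρ * σ⁻¹) * (τ * ρ * τ⁻¹) = Equiv.swap i j) := by
  decide +kernel

lemma grp_aux {n : ℕ} (hn : 4 ≤ n) (N : Subgroup (Equiv.Perm (Fin n))) [hN : N.Normal]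
    (ρ : Equiv.Perm (Fin n)) (hρ : ρ ∈ N) (hs : Equiv.Perm.sign ρ ≠ 1) : N = ⊤ := by
  rcases hn.eq_or_lt with rfl | h5
  · obtain ⟨i, j, hij, h⟩ := grp_aux4 ρ hs
    have hsw : Equiv.swap i j ∈ N := by
      rcases h with h | ⟨σ, τ, h⟩
      · exact h ▸ hρ
      · rw [← h]
        exact N.mul_mem (N.mul_mem hρ (hN.conj_mem _ hρ _)) (hN.conj_mem _ hρ _)
    rw [eq_top_iff, ← Equiv.Perm.closure_isSwap, Subgroup.closure_le]
    rintro τ ⟨a, b, hab, rfl⟩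
    have : IsConj (Equiv.swap i j) (Equiv.swap a b) := Equiv.Perm.isConj_swap hij hab
    obtain ⟨c, hc⟩ := isConj_iff.1 this
    rw [← hc]
    exact hN.conj_mem _ hsw _
  · have hnt : Nontrivial N := by
      refine ⟨⟨⟨ρ, hρ⟩, 1, ?_⟩⟩
      intro h
      have : ρ = 1 := congrArg Subtype.val h
      exact hs (by simp [this])
    have hA : alternatingGroup (Fin n) ≤ N :=
      Equiv.Perm.alternatingGroup_le_of_normal (by simpa using Nat.succ_le_of_lt h5) hnt
    rw [eq_top_iff]
    intro τ _
    by_cases hτ : Equiv.Perm.sign τ = 1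
    · exact hA (Equiv.Perm.mem_alternatingGroup.2 hτ)
    · have h1 : Equiv.Perm.sign (τ * ρ⁻¹) = 1 := by
        rcases Int.units_eq_one_or (Equiv.Perm.sign τ) with h | h
        · exact absurd h hτ
        rcases Int.units_eq_one_or (Equiv.Perm.sign ρ) with h' | h'
        · exact absurd h' hs
        simp [h, h']
      have := N.mul_mem (hA (Equiv.Perm.mem_alternatingGroup.2 h1)) hρ
      simpa using this

lemma exists_equiv_of_basis {K Ω ι : Type*} [Field K] [Field Ω] [Algebra K Ω] [IsAlgClosed Ω]
    (v w : ι → Ω) (hv : IsTranscendenceBasis K v) (hw : IsTranscendenceBasis K w) :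
    ∃ φ : Ω ≃ₐ[K] Ω, ∀ i, φ (v i) = w i := by
  let _ := IsAlgClosed.isAlgClosure_of_transcendence_basis v hv
  let _ := IsAlgClosed.isAlgClosure_of_transcendence_basis w hw
  let e : Algebra.adjoin K (Set.range v) ≃ₐ[K] Algebra.adjoin K (Set.range w) :=
    hv.1.aevalEquiv.symm.trans hw.1.aevalEquiv
  let φ := IsAlgClosure.equivOfEquiv Ω Ω e.toRingEquiv
  refine ⟨AlgEquiv.ofRingEquiv (f := φ) ?_, ?_⟩
  · intro r
    have := IsAlgClosure.equivOfEquiv_algebraMap Ω Ω e.toRingEquiv (algebraMap K _ r)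
    have h2 : e.toRingEquiv (algebraMap K _ r) = algebraMap K _ r := e.commutes r
    rw [h2] at this
    exact this
  · intro i
    have hvi : v i = algebraMap (Algebra.adjoin K (Set.range v)) Ω (hv.1.aevalEquiv (MvPolynomial.X i)) := by
      rw [AlgebraicIndependent.algebraMap_aevalEquiv]; simp
    have hwi : w i = algebraMap (Algebra.adjoin K (Set.range w)) Ω (hw.1.aevalEquiv (MvPolynomial.X i)) := by
      rw [AlgebraicIndependent.algebraMap_aevalEquiv]; simp
    change φ (v i) = w i
    rw [hvi, IsAlgClosure.equivOfEquiv_algebraMap Ω Ω e.toRingEquiv, hwi]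
    congr 1
    change e _ = _
    simp [e]

lemma basis_aux {K Ω : Type*} [Field K] [Field Ω] [Algebra K Ω] {m ℓ : ℕ} (hℓ : 1 ≤ ℓ)
    (α β γ : K) (hα : α ≠ 0)
    (u A : Option (Fin m) → Ω) (hu : IsTranscendenceBasis K u)
    (hA : ∀ i, A (some i) = u (some i))
    (hAp : ∏ i, A i = algebraMap K Ω α * u none ^ ℓ + algebraMap K Ω β)
    (y : Fin (m + 1) → Ω)
    (hy : ∏ i, (X - C (y i)) = ∏ i, (X - C (A i)) - C (algebraMap K Ω γ)) :
    IsTranscendenceBasis K (fun o : Option (Fin m) => o.elim (u none) (fun i => y i.succ)) := by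
  set x : Option (Fin m) → Ω := fun o => o.elim (u none) (fun i => y i.succ) with hx
  let F := IntermediateField.adjoin K (Set.range x)
  have hxF : ∀ o, x o ∈ F := fun o => IntermediateField.subset_adjoin _ _ ⟨o, rfl⟩
  have htF : u none ∈ F := hxF none
  have hyF : ∀ i : Fin m, y i.succ ∈ F := fun i => hxF (some i)
  have hKF : ∀ c : K, algebraMap K Ω c ∈ F := fun c => F.algebraMap_mem c
  -- transcendence of t
  have htr : Transcendental K (u none) := hu.1.transcendental none
  have hyp : ∏ i, y i = algebraMap K Ω α * u none ^ ℓ + algebraMap K Ω β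
      - (-1) ^ (m + 1) * algebraMap K Ω γ := by
    have := congrArg (eval 0) hy
    simp only [eval_prod, eval_sub, eval_X, eval_C, zero_sub, Finset.prod_neg,
      Finset.card_univ, Fintype.card_fin, Fintype.card_option, hAp] at this
    have h1 : ((-1 : Ω) ^ (m + 1)) * (-1) ^ (m + 1) = 1 := by
      rw [← mul_pow]; simp
    linear_combination (-1) ^ (m + 1) * this + 
      (algebraMap K Ω α * u none ^ ℓ + algebraMap K Ω β - ∏ i, y i) * h1
  have hyp0 : ∏ i, y i ≠ 0 := by
    rw [hyp]
    intro h0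
    apply htr
    refine ⟨C α * X ^ ℓ + C (β - (-1) ^ (m + 1) * γ), ?_, ?_⟩
    · intro h
      have := congrArg (fun p => coeff p ℓ) h
      simp only [coeff_add, coeff_C_mul, coeff_X_pow, coeff_C, coeff_zero] at this
      simp [show ℓ ≠ 0 by omega, hα] at this
    · simp
      linear_combination h0
  have hy0F : y 0 ∈ F := by
    rw [Fin.prod_univ_succ] at hyp hyp0
    have h2 : ∏ i : Fin m, y i.succ ≠ 0 := right_ne_zero_of_mul hyp0
    have : y 0 = (algebraMap K Ω α * u none ^ ℓ + algebraMap K Ω β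
      - (-1) ^ (m + 1) * algebraMap K Ω γ) / ∏ i : Fin m, y i.succ := by
      rw [← hyp, mul_div_cancel_right₀ _ h2]
    rw [this]
    refine F.div_mem (F.sub_mem (F.add_mem (F.mul_mem (hKF _) (pow_mem htF _)) (hKF _))
      (F.mul_mem (pow_mem (F.neg_mem F.one_mem) _) (hKF _))) (prod_mem fun i _ => hyF i)
  have hyall : ∀ i, y i ∈ F := fun i => Fin.cases hy0F hyF i
  have hAalg : ∀ i, IsAlgebraic F (A i) := by
    intro i
    apply IsIntegral.isAlgebraic
    refine ⟨∏ i, (X - C (⟨y i, hyall i⟩ : F)) + C (⟨algebraMap K Ω γ, hKF γ⟩ : F), ?_, ?_⟩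
    · have hmon : (∏ i, (X - C (⟨y i, hyall i⟩ : F))).Monic :=
        monic_prod_of_monic _ _ fun i _ => monic_X_sub_C _
      refine hmon.add_of_left ?_
      refine lt_of_le_of_lt degree_C_le ?_
      rw [degree_prod]
      simp only [degree_X_sub_C, Finset.sum_const, Finset.card_univ, Fintype.card_fin, nsmul_one]
      exact_mod_cast Nat.succ_pos m
    · rw [eval₂_eq_eval_map]
      have : (∏ i, (X - C (⟨y i, hyall i⟩ : F)) + C (⟨algebraMap K Ω γ, hKF γ⟩ : F)).map
          (algebraMap F Ω) = ∏ i, (X - C (A i)) := by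
        simp only [Polynomial.map_add, Polynomial.map_prod, Polynomial.map_sub, map_X, map_C]
        change ∏ i, (X - C (y i)) + C (algebraMap K Ω γ) = _
        rw [hy]; ring
      rw [this, eval_prod]
      exact Finset.prod_eq_zero (Finset.mem_univ i) (by simp)
  have huA : ∀ o, IsAlgebraic (Algebra.adjoin K (Set.range x)) (u o) := by
    intro o
    rw [← IntermediateField.isAlgebraic_adjoin_iff]
    cases o with
    | none => exact isAlgebraic_algebraMap (⟨u none, htF⟩ : F)
    | some i => rw [← hA]; exact hAalg _
  have := hu.isAlgebraic
  have hfin : Algebra.IsAlgebraic (Algebra.adjoin K (Set.range x)) Ω := by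
    refine ⟨fun a => ?_⟩
    refine IsAlgebraic.adjoin_of_forall_isAlgebraic (s := Set.range u) ?_ (this.isAlgebraic a)
    rintro _ ⟨⟨o, rfl⟩, -⟩
    exact huA o
  apply Algebra.IsAlgebraic.isTranscendenceBasis_of_lift_le_trdeg_of_finite
  rw [hu.lift_cardinalMk_eq_trdeg]

lemma normal_aux {K Ω : Type*} [Field K] [Field Ω] [Algebra K Ω] [IsAlgClosed Ω] {m ℓ : ℕ}
    (hℓ : 1 ≤ ℓ) (α β γ : K) (hα : α ≠ 0)
    (u A : Option (Fin m) → Ω) (hu : IsTranscendenceBasis K u)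
    (hA : ∀ i, A (some i) = u (some i))
    (hAp : ∏ i, A i = algebraMap K Ω α * u none ^ ℓ + algebraMap K Ω β)
    (hAinj : ∀ g : Ω ≃ₐ[K] Ω, (∀ i, g (u i) = u i) → g (A none) = A none)
    (y : Fin (m + 1) → Ω)
    (hy : ∏ i, (X - C (y i)) = ∏ i, (X - C (A i)) - C (algebraMap K Ω γ)) :
    ∃ N : Subgroup (Equiv.Perm (Fin (m + 1))), N.Normal ∧
      ∀ ρ, ρ ∈ N ↔ ∃ g : Ω ≃ₐ[K] Ω, (∀ i, g (u i) = u i) ∧ ∀ i, g (y i) = y (ρ i) := by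
  refine ⟨{ carrier := {ρ | ∃ g : Ω ≃ₐ[K] Ω, (∀ i, g (u i) = u i) ∧ ∀ i, g (y i) = y (ρ i)}
            one_mem' := ⟨1, by simp, by simp⟩
            mul_mem' := ?_
            inv_mem' := ?_ }, ⟨?_⟩, fun ρ => Iff.rfl⟩
  · rintro ρ ρ' ⟨g, h1, h2⟩ ⟨g', h1', h2'⟩
    exact ⟨g * g', by simp [h1, h1'], by simp [h2, h2']⟩
  · rintro ρ ⟨g, h1, h2⟩
    refine ⟨g⁻¹, fun i => ?_, fun i => ?_⟩
    · rw [AlgEquiv.aut_inv, AlgEquiv.symm_apply_eq, h1]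
    · rw [AlgEquiv.aut_inv, AlgEquiv.symm_apply_eq, h2]; simp
  · rintro ρ ⟨g, h1, h2⟩ σ
    have hb1 := basis_aux hℓ α β γ hα u A hu hA hAp y hy
    have hb2 := basis_aux hℓ α β γ hα u A hu hA hAp (y ∘ σ)
      (by rw [← hy]; exact Equiv.prod_comp σ fun i => X - C (y i))
    obtain ⟨φ, hφ⟩ := exists_equiv_of_basis _ _ hb1 hb2
    have hφt : φ (u none) = u none := hφ none
    have hφs : ∀ i : Fin m, φ (y i.succ) = y (σ i.succ) := fun i => hφ (some i)
    have hyp : ∏ i, y i = algebraMap K Ω α * u none ^ ℓ + algebraMap K Ω β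
        - (-1) ^ (m + 1) * algebraMap K Ω γ := by
      have := congrArg (eval 0) hy
      simp only [eval_prod, eval_sub, eval_X, eval_C, zero_sub, Finset.prod_neg,
        Finset.card_univ, Fintype.card_fin, Fintype.card_option, hAp] at this
      have h1 : ((-1 : Ω) ^ (m + 1)) * (-1) ^ (m + 1) = 1 := by
        rw [← mul_pow]; simp
      linear_combination (-1) ^ (m + 1) * this + 
        (algebraMap K Ω α * u none ^ ℓ + algebraMap K Ω β - ∏ i, y i) * h1
    have hys : ∀ i : Fin m, y (σ i.succ) ≠ 0 := fun i => hb2.1.ne_zero (some i)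
    have hφ0 : φ (y 0) = y (σ 0) := by
      have e1 : φ (∏ i, y i) = ∏ i, y i := by
        rw [hyp]; simp [hφt]
      have e2 : ∏ i, y (σ i) = ∏ i, y i := Equiv.prod_comp σ y
      nth_rw 2 [← e2] at e1
      rw [Fin.prod_univ_succ, Fin.prod_univ_succ, map_mul, map_prod] at e1
      simp only [hφs] at e1
      exact mul_right_cancel₀ (Finset.prod_ne_zero_iff.2 fun i _ => hys i) e1
    have hφy : ∀ i, φ (y i) = y (σ i) := fun i => Fin.cases hφ0 hφs i
    have hφP : (∏ i, (X - C (A i))).map (φ : Ω →+* Ω) = ∏ i, (X - C (A i)) := by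
      have : ∏ i, (X - C (A i)) = ∏ i, (X - C (y i)) + C (algebraMap K Ω γ) := by
        rw [hy]; ring
      rw [this]
      simp only [Polynomial.map_add, Polynomial.map_prod, Polynomial.map_sub, map_X, map_C]
      congr 1
      · rw [← Equiv.prod_comp σ fun i => X - C (y i)]
        exact Finset.prod_congr rfl fun i _ => by simp [hφy]
      · simp
    have hφA : ∀ i, ∃ j, φ (A j) = A i := by
      intro i
      have h := congrArg (eval (A i)) hφP
      have h0 : eval (A i) (∏ i, (X - C (A i))) = 0 := by
        rw [eval_prod]
        exact Finset.prod_eq_zero (Finset.mem_univ i) (by simp)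
      rw [h0] at h
      simp only [Polynomial.map_prod, Polynomial.map_sub, map_X, map_C, eval_prod, eval_sub,
        eval_X, eval_C, Finset.prod_eq_zero_iff] at h
      obtain ⟨j, -, hj⟩ := h
      exact ⟨j, (sub_eq_zero.1 hj).symm⟩
    have hgA : ∀ i, g (A i) = A i := by
      intro i
      cases i with
      | none => exact hAinj g h1
      | some i => rw [hA]; exact h1 _
    refine ⟨φ * g * φ⁻¹, fun i => ?_, fun i => ?_⟩
    · have key : ∀ z w : Ω, φ w = z → g w = w → (φ * g * φ⁻¹) z = z := by
        rintro z w rfl h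
        simp [h]
      cases i with
      | none => exact key _ _ hφt (h1 none)
      | some i =>
        rw [← hA]
        obtain ⟨j, hj⟩ := hφA (some i)
        exact key _ _ hj (hgA j)
    · have : φ.symm (y i) = y (σ.symm i) := by rw [AlgEquiv.symm_apply_eq, hφy]; simp
      simp [this, h2, hφy]

lemma res_prod_aux {Ω : Type*} [Field Ω] {m : ℕ} (y : Fin (m + 1) → Ω) :
    ∃ c : ℤˣ, resultant (∏ i, (X - C (y i))) (derivative (∏ i, (X - C (y i)))) (m + 1) m =
      ((c : ℤ) : Ω) * (Matrix.vandermonde y).det ^ 2 := by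
  have hdeg : (∏ i, (X - C (y i))).natDegree = m + 1 := by
    rw [natDegree_prod_of_monic _ _ fun i _ => monic_X_sub_C _]; simp
  have hdeg' : (derivative (∏ i, (X - C (y i)))).natDegree ≤ m := by
    refine (natDegree_derivative_le _).trans ?_
    rw [hdeg]; simp
  have h1 : resultant (∏ i, (X - C (y i))) (derivative (∏ i, (X - C (y i)))) (m + 1) m
      = ∏ i, eval (y i) (derivative (∏ i, (X - C (y i)))) := by
    have := resultant_prod_left Finset.univ (fun i => X - C (y i))
      (derivative (∏ i, (X - C (y i)))) m (by simp) hdeg'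
    rw [hdeg] at this
    rw [this]
    refine Finset.prod_congr rfl fun i _ => ?_
    rw [natDegree_X_sub_C, resultant_X_sub_C_left _ _ _ hdeg']
  have h2 : ∀ i, eval (y i) (derivative (∏ i, (X - C (y i)))) =
      ∏ j ∈ Finset.univ.erase i, (y i - y j) := by
    intro i
    have := Lagrange.eval_nodal_derivative_eval_node_eq (v := y) (Finset.mem_univ i)
    rw [Lagrange.nodal, Lagrange.nodal] at this
    rw [this, eval_prod]; simp
  have h3 : ∀ i : Fin (m + 1), ∏ j ∈ Finset.univ.erase i, (y i - y j) =
      ((-1) ^ (Finset.Ioi i).card * ∏ j ∈ Finset.Ioi i, (y j - y i)) *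
        ∏ j ∈ Finset.Iio i, (y i - y j) := by
    intro i
    have : Finset.univ.erase i = Finset.Ioi i ∪ Finset.Iio i := by
      ext j; simp; omega
    rw [this, Finset.prod_union]
    · congr 1
      rw [← Finset.prod_neg]
      exact Finset.prod_congr rfl fun j _ => by ring
    · rw [Finset.disjoint_left]
      intro j; simp only [Finset.mem_Ioi, Finset.mem_Iio]; exact fun h => not_lt.2 h.le
  have h4 : ∏ i : Fin (m + 1), ∏ j ∈ Finset.Iio i, (y i - y j) =
      ∏ i : Fin (m + 1), ∏ j ∈ Finset.Ioi i, (y j - y i) := by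
    apply Finset.prod_comm'
    simp
  refine ⟨(-1) ^ (∑ i : Fin (m + 1), (Finset.Ioi i).card), ?_⟩
  rw [h1, Finset.prod_congr rfl fun i _ => (h2 i).trans (h3 i), Finset.prod_mul_distrib,
    Finset.prod_mul_distrib, h4, Matrix.det_vandermonde, Finset.prod_pow_eq_pow_sum]
  push_cast
  ring

lemma res_tri_aux {S : Type*} [CommRing S] [Nontrivial S] (k : ℕ) (r s g c : S)
    (hc : ((k : S) + 2) * c = 1) :
    resultant ((X - C r) ^ (k + 1) * (X - C (r + s)) - C g)
      (derivative ((X - C r) ^ (k + 1) * (X - C (r + s)) - C g)) (k + 2) (k + 1) =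
     ((-1) ^ ((k + 2) * k) * (-g) ^ k) * ((k + 2) ^ (k + 2) * ((-1) ^ (k + 2) *
       (- (c ^ (k + 2) * (k + 1) ^ (k + 1) * s ^ (k + 2) + g)))) := by
  set P := (X - C r) ^ (k + 1) * (X - C (r + s)) - C g with hP
  set θ := r + c * (k + 1) * s with hθ
  have hu : IsUnit ((k : S) + 2) := IsUnit.of_mul_eq_one _ hc
  have hdeg : P.natDegree ≤ k + 2 := by
    rw [hP]
    compute_degree
  have hder : derivative P = (X - C r) ^ k * (C ((k : S) + 2) * (X - C θ)) := by
    have hc' : C ((k : S) + 2) * C c = 1 := by rw [← C_mul, hc, C_1]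
    rw [hP, hθ]
    simp only [derivative_sub, derivative_mul, derivative_X_sub_C_pow, derivative_add, derivative_C, derivative_X,
      C_add, C_mul, map_natCast, map_ofNat, C_1] at hc' ⊢
    push_cast
    linear_combination (X - C r) ^ k * ((k : S[X]) + 1) * C s * hc'
  have hd2 : (C ((k : S) + 2) * (X - C θ)).natDegree = 1 := by
    rw [natDegree_C_mul_of_isUnit hu, natDegree_X_sub_C]
  have hd1 : ((X - C r) ^ k).natDegree = k := by
    rw [(monic_X_sub_C r).natDegree_pow, natDegree_X_sub_C, mul_one]
  have h := resultant_mul_right P ((X - C r) ^ k) (C ((k : S) + 2) * (X - C θ)) (k + 2) hdeg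
  rw [hd1, hd2] at h
  rw [hder, h, resultant_X_sub_C_pow_right _ _ _ _ hdeg, resultant_C_mul_right,
    resultant_X_sub_C_right _ _ _ hdeg]
  congr 2
  · simp [hP]
  · congr 2
    simp only [hP, hθ, eval_sub, eval_mul, eval_pow, eval_X, eval_C]
    have : c * (k + 1) * s - s = - (c * s) := by linear_combination s * hc
    rw [show r + c * (k + 1) * s - r = c * (k + 1) * s by ring,
      show r + c * (k + 1) * s - (r + s) = -(c * s) by linear_combination s * hc]
    rw [mul_pow, mul_pow]
    ring

/-- The polynomial with cleared denominators. -/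
noncomputable def clearedPoly (K : Type*) [Field K] (m ℓ : ℕ) (α β γ : K) :
    Polynomial (MvPolynomial (Option (Fin m)) K) :=
  (∏ i : Fin m, (X - C (MvPolynomial.X (some i)))) *
    (C (∏ i : Fin m, MvPolynomial.X (some i)) * X -
      C (MvPolynomial.C α * MvPolynomial.X none ^ ℓ + MvPolynomial.C β)) -
    C (MvPolynomial.C γ * ∏ i : Fin m, MvPolynomial.X (some i))

lemma dual_pow_aux {E S : Type*} [CommRing E] [CommRing S] (j : E →+* S) (ε : S) (hε : ε * ε = 0)
    (x y : E) (n : ℕ) :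
    (j x + j y * ε) ^ n = j (x ^ n) + j (n * x ^ (n - 1) * y) * ε := by
  induction n with
  | zero => simp
  | succ n ih =>
    rw [pow_succ, ih]
    rcases n with _ | n
    · simp
    · simp only [map_mul, map_pow, map_natCast, Nat.add_sub_cancel, Nat.cast_add, Nat.cast_one,
        map_add, map_one]
      linear_combination ((n : S) + 1) * j x ^ n * j y * j y * hε

lemma special_core {K E S : Type*} [Field K] [Field E] [CharZero E] [IsAlgClosed E] [Algebra K E]
    [CommRing S] [Nontrivial S] (j : E →+* S) (ε : S) (hε : ε * ε = 0)
    (k ℓ : ℕ) (hℓ : 1 ≤ ℓ) (α β γ : K) (hα : α ≠ 0) (hγ : γ ≠ 0) :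
    ∃ (Φ : MvPolynomial (Option (Fin (k + 1))) K →+* S) (W : E), W ≠ 0 ∧
      Φ (resultant (clearedPoly K (k + 1) ℓ α β γ) (derivative (clearedPoly K (k + 1) ℓ α β γ))
        (k + 2) (k + 1) * ∏ i : Fin (k + 1), MvPolynomial.X (some i)) = j W * ε := by
  let a : E := algebraMap K E α
  let b : E := algebraMap K E β
  let g : E := algebraMap K E γ
  have ha : a ≠ 0 := by simpa [a] using hα
  have hg : g ≠ 0 := by simpa [g] using hγ
  have hk1 : (k : E) + 1 ≠ 0 := by exact_mod_cast Nat.succ_ne_zero k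
  have hk2 : (k : E) + 2 ≠ 0 := by exact_mod_cast Nat.succ_ne_zero (k + 1)
  let q : E := ((k : E) + 2)⁻¹
  let κ : E := q ^ (k + 2) * (k + 1) ^ (k + 1)
  have hκ : κ ≠ 0 := mul_ne_zero (pow_ne_zero _ (inv_ne_zero hk2)) (pow_ne_zero _ hk1)
  obtain ⟨s0, hs0⟩ := IsAlgClosed.exists_pow_nat_eq (-g / κ) (n := k + 2) (by omega)
  have hs0' : κ * s0 ^ (k + 2) + g = 0 := by rw [hs0, mul_div_cancel₀ _ hκ]; ring
  have hs00 : s0 ≠ 0 := by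
    rintro rfl
    apply hg
    simpa using hs0'
  obtain ⟨r, hr⟩ : ∃ r : E, r ≠ 0 ∧ r ^ (k + 1) * (r + s0) - b ≠ 0 := by
    have hp : (X * (X ^ (k + 1) * (X + C s0) - C b) : E[X]) ≠ 0 := by
      refine mul_ne_zero X_ne_zero ?_
      intro h
      have := congrArg (fun p => coeff p (k + 2)) h
      simp only [coeff_sub, mul_add, ← pow_succ, coeff_add, coeff_X_pow, coeff_mul_C, coeff_C,
        coeff_zero] at this
      simp at this
    obtain ⟨r, hr⟩ := Polynomial.exists_eval_ne_zero_of_natDegree_lt_card _ hp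
      (lt_of_lt_of_le Cardinal.natCast_lt_aleph0 (Cardinal.aleph0_le_mk E))
    simp only [eval_mul, eval_X, eval_sub, eval_pow, eval_add, eval_C] at hr
    exact ⟨r, left_ne_zero_of_mul hr, right_ne_zero_of_mul hr⟩
  obtain ⟨hr0, hrb⟩ := hr
  obtain ⟨t0, ht0⟩ := IsAlgClosed.exists_pow_nat_eq ((r ^ (k + 1) * (r + s0) - b) / a) (n := ℓ)
    (by omega)
  have ht00 : t0 ≠ 0 := by
    rintro rfl
    rw [zero_pow (by omega)] at ht0
    exact div_ne_zero hrb ha ht0.symm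
  have hl0 : (ℓ : E) ≠ 0 := by exact_mod_cast (by omega : ℓ ≠ 0)
  let t1 : E := r ^ (k + 1) / (a * (ℓ * t0 ^ (ℓ - 1)))
  have ht1 : a * (ℓ * t0 ^ (ℓ - 1)) * t1 = r ^ (k + 1) :=
    mul_div_cancel₀ _ (mul_ne_zero ha (mul_ne_zero hl0 (pow_ne_zero _ ht00)))
  let rS : S := j r
  let sS : S := j s0 + j 1 * ε
  let tS : S := j t0 + j t1 * ε
  have hkey : j a * tS ^ ℓ + j b = rS ^ (k + 1) * (rS + sS) := by
    have h0 : a * t0 ^ ℓ + b = r ^ (k + 1) * (r + s0) := by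
      rw [ht0, mul_div_cancel₀ _ ha]; ring
    have h0' := congrArg j h0
    have h1' := congrArg j ht1
    rw [dual_pow_aux j ε hε]
    simp only [rS, sS, map_mul, map_add, map_pow, map_natCast, map_one] at h0' h1' ⊢
    linear_combination h0' + ε * h1'
  let Φ : MvPolynomial (Option (Fin (k + 1))) K →+* S :=
    MvPolynomial.eval₂Hom (j.comp (algebraMap K E)) (fun o => o.elim tS (fun _ => rS))
  have hT : Φ (∏ i : Fin (k + 1), MvPolynomial.X (some i)) = rS ^ (k + 1) := by
    simp [Φ]
  have hΦ : (clearedPoly K (k + 1) ℓ α β γ).map Φ =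
      C (rS ^ (k + 1)) * ((X - C rS) ^ (k + 1) * (X - C (rS + sS)) - C (j g)) := by
    have e1 : Φ (MvPolynomial.C α * MvPolynomial.X none ^ ℓ + MvPolynomial.C β)
       = rS ^ (k + 1) * (rS + sS) := by
      rw [← hkey]; simp [Φ, a, b]
    have e2 : Φ (MvPolynomial.C γ) = j g := by simp [Φ, g]
    have e4 : ∀ i : Fin (k + 1), Φ (MvPolynomial.X (some i)) = rS := by
      simp [Φ]
    have e5 : Φ (MvPolynomial.C γ * ∏ i : Fin (k + 1), MvPolynomial.X (some i)) =
      j g * rS ^ (k + 1) := by rw [map_mul, hT, e2]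
    simp only [clearedPoly, Polynomial.map_sub, Polynomial.map_mul, Polynomial.map_prod, map_X,
      map_C, e1, hT, e4, e5, Finset.prod_const, Finset.card_univ, Fintype.card_fin]
    simp only [C_mul, C_add, C_pow]
    ring
  have hres : Φ (resultant (clearedPoly K (k + 1) ℓ α β γ)
      (derivative (clearedPoly K (k + 1) ℓ α β γ)) (k + 2) (k + 1)) =
      (rS ^ (k + 1)) ^ (k + 2) * ((rS ^ (k + 1)) ^ (k + 1) *
      (((-1) ^ ((k + 2) * k) * (-(j g)) ^ k) * (((k : S) + 2) ^ (k + 2) * ((-1) ^ (k + 2) *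
       (- ((j q) ^ (k + 2) * ((k : S) + 1) ^ (k + 1) * sS ^ (k + 2)
         + j g)))))) := by
    rw [← res_tri_aux k rS sS (j g) (j q) ?_]
    · rw [← resultant_map_map, ← derivative_map, hΦ, derivative_C_mul, resultant_C_mul_right,
        resultant_C_mul_left]
    · have := congrArg j (mul_inv_cancel₀ hk2)
      simpa only [map_mul, map_add, map_natCast, map_ofNat, map_one] using this
  have hlast : (j q) ^ (k + 2) * ((k : S) + 1) ^ (k + 1) * sS ^ (k + 2)
         + j g = j (κ * ((k + 2) * s0 ^ (k + 1))) * ε := by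
    have h0' := congrArg j hs0'
    rw [dual_pow_aux j ε hε]
    simp only [κ, map_mul, map_add, map_pow, map_natCast, map_one, map_ofNat, map_zero,
      Nat.cast_add, Nat.cast_ofNat, show k + 2 - 1 = k + 1 from rfl] at h0' ⊢
    linear_combination h0'
  refine ⟨Φ, (r ^ (k + 1)) ^ (k + 2) * ((r ^ (k + 1)) ^ (k + 1) *
      (((-1) ^ ((k + 2) * k) * (-g) ^ k) * (((k : E) + 2) ^ (k + 2) * ((-1) ^ (k + 2) *
       (- (κ * ((k + 2) * s0 ^ (k + 1)))))))) * r ^ (k + 1), ?_, ?_⟩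
  · have : (-1 : E) ≠ 0 := by simp
    have h2 : -g ≠ 0 := neg_ne_zero.2 hg
    have h3 : -(κ * ((k + 2) * s0 ^ (k + 1))) ≠ 0 :=
      neg_ne_zero.2 (mul_ne_zero hκ (mul_ne_zero hk2 (pow_ne_zero _ hs00)))
    refine mul_ne_zero (mul_ne_zero ?_ (mul_ne_zero ?_ (mul_ne_zero (mul_ne_zero ?_ ?_)
      (mul_ne_zero ?_ (mul_ne_zero ?_ h3))))) ?_
    all_goals first | exact pow_ne_zero _ this | exact pow_ne_zero _ h2 | exact pow_ne_zero _ hk2 | exact pow_ne_zero _ hr0 | exact pow_ne_zero _ (pow_ne_zero _ hr0)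
  · rw [map_mul, hres, hT, hlast]
    simp only [map_mul, map_pow, map_neg, map_one, map_add, map_natCast, map_ofNat, rS]
    ring

lemma special_aux (K : Type*) [Field K] [CharZero K] (k ℓ : ℕ) (hℓ : 1 ≤ ℓ) (α β γ : K)
    (hα : α ≠ 0) (hγ : γ ≠ 0) (d : MvPolynomial (Option (Fin (k + 1))) K) (c : ℤˣ) :
    d ^ 2 ≠ ((c : ℤ) : MvPolynomial (Option (Fin (k + 1))) K) *
      (resultant (clearedPoly K (k + 1) ℓ α β γ) (derivative (clearedPoly K (k + 1) ℓ α β γ))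
        (k + 2) (k + 1) * ∏ i : Fin (k + 1), MvPolynomial.X (some i)) := by
  have : CharZero (AlgebraicClosure K) :=
    charZero_of_injective_algebraMap (algebraMap K (AlgebraicClosure K)).injective
  obtain ⟨Φ, W, hW, h⟩ := special_core (K := K) (E := AlgebraicClosure K)
    (S := DualNumber (AlgebraicClosure K))
    (TrivSqZeroExt.inlHom (AlgebraicClosure K) (AlgebraicClosure K)) DualNumber.eps (by simp)
    k ℓ hℓ α β γ hα hγ
  intro hd
  have hd' := congrArg Φ hd
  rw [map_mul, h, map_pow, map_intCast] at hd'
  generalize Φ d = z at hd'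
  have h1 := congrArg TrivSqZeroExt.fst hd'
  have h2 := congrArg TrivSqZeroExt.snd hd'
  rw [TrivSqZeroExt.fst_pow] at h1
  have h1' : z.fst = 0 := by simpa using h1
  rw [TrivSqZeroExt.snd_pow] at h2
  rcases Int.units_eq_one_or c with rfl | rfl <;> simp [h1', hW, hW.symm] at h2

lemma exists_roots_fun_aux {Ω : Type*} [Field Ω] [IsAlgClosed Ω] (p : Polynomial Ω) (hm : p.Monic) (n : ℕ)
    (hd : p.natDegree = n) : ∃ y : Fin n → Ω, ∏ i, (X - C (y i)) = p := by
  have hs := IsAlgClosed.splits p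
  have h1 := hs.eq_prod_roots_of_monic hm
  have h2 : p.roots.toList.length = n := by
    rw [Multiset.length_toList, ← hd, hs.natDegree_eq_card_roots]
  subst h2
  refine ⟨fun i => p.roots.toList.get i, ?_⟩
  conv_rhs => rw [h1, ← Multiset.coe_toList p.roots, Multiset.map_coe, Multiset.prod_coe]
  rw [← List.prod_ofFn]
  congr 1
  refine List.ext_get (by simp) ?_
  intro i h1 h2
  simp

lemma gal_perm_aux {L Ω : Type*} [Field L] [Field Ω] [Algebra L Ω] [IsAlgClosed Ω] (P : L[X])
    {n : ℕ} (y : Fin n → Ω) (hy : Function.Injective y)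
    (hP : P.map (algebraMap L Ω) = ∏ i, (X - C (y i)))
    (hN : ∀ ρ : Equiv.Perm (Fin n), ∃ g : Ω ≃ₐ[L] Ω, ∀ i, g (y i) = y (ρ i)) :
    Nonempty (P.Gal ≃* Equiv.Perm (Fin n)) := by
  have : Fact ((P.map (algebraMap L Ω)).Splits) := ⟨IsAlgClosed.splits _⟩
  have hP0 : P.map (algebraMap L Ω) ≠ 0 := by
    rw [hP]; exact (monic_prod_of_monic _ _ fun i _ => monic_X_sub_C _).ne_zero
  have hmem : ∀ x, x ∈ P.rootSet Ω ↔ ∃ i, y i = x := by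
    intro x
    rw [mem_rootSet', aeval_def, ← eval_map, hP, eval_prod, Finset.prod_eq_zero_iff]
    rw [hP] at hP0
    simp [hP0, sub_eq_zero, eq_comm]
  let e : Fin n ≃ P.rootSet Ω := Equiv.ofBijective (fun i => ⟨y i, (hmem _).2 ⟨i, rfl⟩⟩) <| by
    constructor
    · intro i j hij
      exact hy (congrArg Subtype.val hij)
    · rintro ⟨x, hx⟩
      obtain ⟨i, rfl⟩ := (hmem x).1 hx
      exact ⟨i, rfl⟩
  have he : ∀ i, (e i : Ω) = y i := fun i => rfl
  refine ⟨(MulEquiv.ofBijective (Gal.galActionHom P Ω) ⟨Gal.galActionHom_injective P Ω, ?_⟩).trans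
    e.symm.permCongrHom⟩
  intro σ
  obtain ⟨g, hg⟩ := hN (e.symm.permCongr σ)
  refine ⟨Gal.restrict P Ω g, ?_⟩
  ext x
  rw [Gal.galActionHom_restrict]
  obtain ⟨i, rfl⟩ := e.surjective x
  rw [he, hg, ← he]
  simp [Equiv.permCongr_apply]

lemma main_gen {K L Ω : Type*} [Field K] [CharZero K] (k ℓ : ℕ) (hk : 2 ≤ k) (hℓ : 1 ≤ ℓ)
    (α β γ : K) (hα : α ≠ 0) (hγ : γ ≠ 0) [Field L] [Field Ω]
    [Algebra (MvPolynomial (Option (Fin (k + 1))) K) L]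
    [IsFractionRing (MvPolynomial (Option (Fin (k + 1))) K) L]
    [Algebra K Ω] [Algebra (MvPolynomial (Option (Fin (k + 1))) K) Ω] [Algebra L Ω]
    [IsScalarTower (MvPolynomial (Option (Fin (k + 1))) K) L Ω]
    [IsScalarTower K (MvPolynomial (Option (Fin (k + 1))) K) Ω]
    [IsAlgClosed Ω] [Algebra.IsAlgebraic L Ω] (P : L[X])
    (hP : P = (∏ i : Fin (k + 1), (X - C (algebraMap (MvPolynomial (Option (Fin (k + 1))) K)
      L (MvPolynomial.X (some i))))) *
    (X - C ((algebraMap (MvPolynomial (Option (Fin (k + 1))) K)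
        L (MvPolynomial.C α) *
        algebraMap (MvPolynomial (Option (Fin (k + 1))) K)
        L (MvPolynomial.X none) ^ ℓ +
        algebraMap (MvPolynomial (Option (Fin (k + 1))) K)
        L (MvPolynomial.C β)) /
      ∏ i : Fin (k + 1), algebraMap (MvPolynomial (Option (Fin (k + 1))) K)
        L (MvPolynomial.X (some i)))) -
    C (algebraMap (MvPolynomial (Option (Fin (k + 1))) K)
      L (MvPolynomial.C γ))) :
    P.Separable ∧ Nonempty (P.Gal ≃* Equiv.Perm (Fin (k + 2))) := by
  have hinjL : Function.Injective (algebraMap (MvPolynomial (Option (Fin (k + 1))) K) L) := IsFractionRing.injective (MvPolynomial (Option (Fin (k + 1))) K) L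
  have hφ : Function.Injective (algebraMap (MvPolynomial (Option (Fin (k + 1))) K) Ω) := by
    rw [IsScalarTower.algebraMap_eq (MvPolynomial (Option (Fin (k + 1))) K) L Ω]
    exact (algebraMap L Ω).injective.comp hinjL
  have hCK : ∀ x : K, algebraMap (MvPolynomial (Option (Fin (k + 1))) K) Ω (MvPolynomial.C x) = algebraMap K Ω x := fun x => by
    rw [IsScalarTower.algebraMap_apply K (MvPolynomial (Option (Fin (k + 1))) K) Ω]; rfl
  have hLΩ : ∀ x : (MvPolynomial (Option (Fin (k + 1))) K), algebraMap L Ω (algebraMap (MvPolynomial (Option (Fin (k + 1))) K) L x) = algebraMap (MvPolynomial (Option (Fin (k + 1))) K) Ω x := fun x =>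
    (IsScalarTower.algebraMap_apply (MvPolynomial (Option (Fin (k + 1))) K) L Ω x).symm
  let u : Option (Fin (k + 1)) → Ω := fun o => algebraMap (MvPolynomial (Option (Fin (k + 1))) K) Ω (MvPolynomial.X o)
  let T : (MvPolynomial (Option (Fin (k + 1))) K) := ∏ i : Fin (k + 1), MvPolynomial.X (some i)
  have hT0 : T ≠ 0 := Finset.prod_ne_zero_iff.2 fun i _ => MvPolynomial.X_ne_zero _
  have hTΩ : algebraMap (MvPolynomial (Option (Fin (k + 1))) K) Ω T ≠ 0 := by
    rw [Ne, ← map_zero (algebraMap (MvPolynomial (Option (Fin (k + 1))) K) Ω)]; exact fun h => hT0 (hφ h)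
  have hTu : algebraMap (MvPolynomial (Option (Fin (k + 1))) K) Ω T = ∏ i : Fin (k + 1), u (some i) := by
    rw [map_prod]
  let A : Option (Fin (k + 1)) → Ω := fun o => o.elim
    ((algebraMap K Ω α * u none ^ ℓ + algebraMap K Ω β) / algebraMap (MvPolynomial (Option (Fin (k + 1))) K) Ω T) (fun i => u (some i))
  have hA : ∀ i, A (some i) = u (some i) := fun i => rfl
  have hAn : A none = (algebraMap K Ω α * u none ^ ℓ + algebraMap K Ω β) / algebraMap (MvPolynomial (Option (Fin (k + 1))) K) Ω T := rfl
  have hAp : ∏ i, A i = algebraMap K Ω α * u none ^ ℓ + algebraMap K Ω β := by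
    rw [Fintype.prod_option, hAn]
    simp only [hA]
    rw [← hTu, div_mul_cancel₀ _ hTΩ]
  have hAinj : ∀ g : Ω ≃ₐ[K] Ω, (∀ i, g (u i) = u i) → g (A none) = A none := by
    intro g hg
    rw [hAn, hTu]
    simp only [map_div₀, map_add, map_mul, map_pow, map_prod, AlgEquiv.commutes, hg]
  have hPm : P.map (algebraMap L Ω) = ∏ i, (X - C (A i)) - C (algebraMap K Ω γ) := by
    rw [hP, Fintype.prod_option, hAn, hTu]
    simp only [hA, Polynomial.map_sub, Polynomial.map_mul, Polynomial.map_prod, map_X, map_C,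
      map_div₀, map_add, map_mul, map_pow, map_prod, hLΩ, hCK, u]
    ring
  have hMon : (∏ i, (X - C (A i)) : Polynomial Ω).Monic := monic_prod_of_monic _ _ fun i _ => monic_X_sub_C _
  have hdeg : (∏ i, (X - C (A i)) : Polynomial Ω).degree = ((k + 2 : ℕ) : WithBot ℕ) := by
    rw [degree_prod]; simp; norm_cast
  have hlt : (C (algebraMap K Ω γ)).degree < (∏ i, (X - C (A i)) : Polynomial Ω).degree := by
    rw [hdeg]
    exact lt_of_le_of_lt degree_C_le (by exact_mod_cast Nat.succ_pos _)
  obtain ⟨y, hy⟩ := exists_roots_fun_aux (P.map (algebraMap L Ω))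
    (by rw [hPm]; exact hMon.sub_of_left hlt) (k + 2)
    (by rw [hPm]; exact natDegree_eq_of_degree_eq_some ((degree_sub_eq_left_of_degree_lt hlt).trans hdeg))
  have hcl : (clearedPoly K (k + 1) ℓ α β γ).map (algebraMap (MvPolynomial (Option (Fin (k + 1))) K) Ω) =
      C (algebraMap (MvPolynomial (Option (Fin (k + 1))) K) Ω T) * ∏ i, (X - C (y i)) := by
    have hdv : algebraMap K Ω α * u none ^ ℓ + algebraMap K Ω β = algebraMap (MvPolynomial (Option (Fin (k + 1))) K) Ω T * A none := by
      rw [hAn, mul_div_cancel₀ _ hTΩ]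
    have e1 : algebraMap (MvPolynomial (Option (Fin (k + 1))) K) Ω (MvPolynomial.C α * MvPolynomial.X none ^ ℓ + MvPolynomial.C β)
       = algebraMap (MvPolynomial (Option (Fin (k + 1))) K) Ω T * A none := by
      rw [← hdv]; simp only [map_add, map_mul, map_pow, hCK, u]
    have e2 : algebraMap (MvPolynomial (Option (Fin (k + 1))) K) Ω (∏ i : Fin (k + 1), MvPolynomial.X (some i)) = algebraMap (MvPolynomial (Option (Fin (k + 1))) K) Ω T := rfl
    have e3 : algebraMap (MvPolynomial (Option (Fin (k + 1))) K) Ω (MvPolynomial.C γ * ∏ i : Fin (k + 1), MvPolynomial.X (some i)) =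
       algebraMap K Ω γ * algebraMap (MvPolynomial (Option (Fin (k + 1))) K) Ω T := by rw [map_mul, hCK]
    have e4 : ∀ i, algebraMap (MvPolynomial (Option (Fin (k + 1))) K) Ω (MvPolynomial.X (some i)) = A (some i) := fun i => rfl
    rw [hy, hPm, Fintype.prod_option]
    simp only [clearedPoly, Polynomial.map_sub, Polynomial.map_mul, Polynomial.map_prod, map_X,
      map_C, e1, e2, e3, e4]
    simp only [C_mul]
    ring
  obtain ⟨c, hc⟩ := res_prod_aux (m := k + 1) y
  set δ := (Matrix.vandermonde y).det with hδ
  let D0 : (MvPolynomial (Option (Fin (k + 1))) K) := resultant (clearedPoly K (k + 1) ℓ α β γ)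
    (derivative (clearedPoly K (k + 1) ℓ α β γ)) (k + 2) (k + 1)
  have hD0 : algebraMap (MvPolynomial (Option (Fin (k + 1))) K) Ω D0 = (algebraMap (MvPolynomial (Option (Fin (k + 1))) K) Ω T) ^ (k + 2) * ((algebraMap (MvPolynomial (Option (Fin (k + 1))) K) Ω T) ^ (k + 1) *
      (((c : ℤ) : Ω) * δ ^ 2)) := by
    rw [← hc, ← resultant_map_map, ← derivative_map, hcl, derivative_C_mul, resultant_C_mul_right,
        resultant_C_mul_left]
  have hcc : ((c : ℤ) : Ω) * ((c : ℤ) : Ω) = 1 := by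
    rcases Int.units_eq_one_or c with h | h <;> simp [h]
  have hsq : algebraMap (MvPolynomial (Option (Fin (k + 1))) K) Ω (((c : ℤ) : (MvPolynomial (Option (Fin (k + 1))) K)) * (D0 * T)) = ((algebraMap (MvPolynomial (Option (Fin (k + 1))) K) Ω T) ^ (k + 2) * δ) ^ 2 := by
    rw [map_mul, map_mul, hD0, map_intCast]
    linear_combination ((algebraMap (MvPolynomial (Option (Fin (k + 1))) K) Ω T) ^ (k + 2) * δ) ^ 2 * hcc
  have hδ0 : δ ≠ 0 := by
    intro h
    rw [h] at hsq
    have h0 : ((c : ℤ) : (MvPolynomial (Option (Fin (k + 1))) K)) * (D0 * T) = 0 := hφ (by rw [hsq]; simp)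
    refine special_aux K k ℓ hℓ α β γ hα hγ 0 c ?_
    rw [show (0 : (MvPolynomial (Option (Fin (k + 1))) K)) ^ 2 = 0 by simp]
    exact h0.symm
  have hyinj : Function.Injective y := Matrix.det_vandermonde_ne_zero_iff.1 hδ0
  refine ⟨?_, ?_⟩
  · rw [← separable_map (algebraMap L Ω), ← hy]
    exact separable_prod_X_sub_C_iff.2 hyinj
  have : CharZero L := charZero_of_injective_algebraMap hinjL
  have : IsAlgClosure L Ω := ⟨inferInstance, inferInstance⟩
  have : IsGalois L Ω := IsAlgClosure.isGalois L Ω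
  have hex : ∃ g : Ω ≃ₐ[L] Ω, g ((algebraMap (MvPolynomial (Option (Fin (k + 1))) K) Ω T) ^ (k + 2) * δ) ≠ (algebraMap (MvPolynomial (Option (Fin (k + 1))) K) Ω T) ^ (k + 2) * δ := by
    by_contra! hfix
    obtain ⟨w, hw⟩ := (InfiniteGalois.mem_range_algebraMap_iff_fixed
      ((algebraMap (MvPolynomial (Option (Fin (k + 1))) K) Ω T) ^ (k + 2) * δ)).2 hfix
    have hw2 : w ^ 2 = algebraMap (MvPolynomial (Option (Fin (k + 1))) K) L (((c : ℤ) : (MvPolynomial (Option (Fin (k + 1))) K)) * (D0 * T)) := by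
      apply (algebraMap L Ω).injective
      rw [map_pow, hw, hLΩ, hsq]
    have hint : IsIntegral (MvPolynomial (Option (Fin (k + 1))) K) w := by
      refine IsIntegral.of_pow (n := 2) (by norm_num) ?_
      rw [hw2]; exact isIntegral_algebraMap
    obtain ⟨d, hd⟩ := IsIntegrallyClosed.isIntegral_iff.1 hint
    refine special_aux K k ℓ hℓ α β γ hα hγ d c ?_
    apply hinjL
    rw [map_pow, hd, hw2]
  obtain ⟨g, hg⟩ := hex
  have hmem : ∀ x : Ω, (P.map (algebraMap L Ω)).eval x = 0 ↔ ∃ i, y i = x := by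
    intro x
    rw [← hy, eval_prod, Finset.prod_eq_zero_iff]
    simp [sub_eq_zero, eq_comm]
  have hgy : ∀ i, ∃ i', y i' = g (y i) := by
    intro i
    rw [← hmem, eval_map, ← aeval_def]
    have h0 := (hmem (y i)).2 ⟨i, rfl⟩
    rw [eval_map, ← aeval_def] at h0
    have := Polynomial.aeval_algHom_apply g.toAlgHom (y i) P
    rw [h0, map_zero] at this
    exact this
  choose r hr using hgy
  have hrinj : Function.Injective r := by
    intro i i' h
    have := congrArg y h
    rw [hr, hr] at this
    exact hyinj (g.injective this)
  let ρ : Equiv.Perm (Fin (k + 2)) := Equiv.ofBijective r (Finite.injective_iff_bijective.1 hrinj)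
  have hρ : ∀ i, g (y i) = y (ρ i) := fun i => (hr i).symm
  have hgR : ∀ x : (MvPolynomial (Option (Fin (k + 1))) K), g (algebraMap (MvPolynomial (Option (Fin (k + 1))) K) Ω x) = algebraMap (MvPolynomial (Option (Fin (k + 1))) K) Ω x := fun x => by
    rw [← hLΩ, g.commutes]
  have hsign : Equiv.Perm.sign ρ ≠ 1 := by
    intro h1
    apply hg
    have : g δ = δ := by
      have e := Matrix.det_permute ρ (Matrix.vandermonde y)
      rw [h1] at e
      rw [hδ, AlgEquiv.map_det]
      conv_rhs => rw [← one_mul (Matrix.vandermonde y).det]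
      simp only [Units.val_one, Int.cast_one] at e
      rw [← e]
      congr 1
      ext i j'
      simp [Matrix.vandermonde, hρ]
    rw [map_mul, map_pow, hgR, this]
  have hu : IsTranscendenceBasis K u := by
    have : Algebra.IsAlgebraic (MvPolynomial (Option (Fin (k + 1))) K) Ω := (IsFractionRing.comap_isAlgebraic_iff (A := (MvPolynomial (Option (Fin (k + 1))) K)) (K := L) (C := Ω)).2 inferInstance
    have : FaithfulSMul (MvPolynomial (Option (Fin (k + 1))) K) Ω := (faithfulSMul_iff_algebraMap_injective (MvPolynomial (Option (Fin (k + 1))) K) Ω).2 hφ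
    exact (IsTranscendenceBasis.mvPolynomial (Option (Fin (k + 1))) K).algebraMap_comp (A := Ω)
  obtain ⟨N, hNn, hN⟩ := normal_aux hℓ α β γ hα u A hu hA hAp hAinj y (by rw [hy, hPm])
  have hgK : ∀ x : K, g (algebraMap K Ω x) = algebraMap K Ω x := fun x => by
    rw [← hCK, hgR]
  have hρN : ρ ∈ N := by
    rw [hN]
    exact ⟨AlgEquiv.ofRingEquiv (f := g.toRingEquiv) hgK, fun i => hgR _, fun i => hρ i⟩
  have hNtop : N = ⊤ := grp_aux (by omega) N ρ hρN hsign
  refine gal_perm_aux P y hyinj hy.symm ?_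
  intro σ
  obtain ⟨g', h1, h2⟩ := (hN σ).1 (by rw [hNtop]; trivial)
  have hL : g'.toRingEquiv.toRingHom.comp (algebraMap L Ω) = algebraMap L Ω := by
    apply IsLocalization.ringHom_ext (nonZeroDivisors (MvPolynomial (Option (Fin (k + 1))) K))
    apply MvPolynomial.ringHom_ext
    · intro x
      simp only [RingHom.comp_apply, hLΩ, hCK]
      exact g'.commutes x
    · intro i
      simp only [RingHom.comp_apply, hLΩ]
      exact h1 i
  exact ⟨AlgEquiv.ofRingEquiv (f := g'.toRingEquiv) (fun x => RingHom.congr_fun hL x), h2⟩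


/-- **Proposition 5.4.**  Let `K` have characteristic `0`, `n ≥ 4`, `ℓ ≥ 1`,
`α, γ ∈ K^*`, `β ∈ K`.  Then the polynomial
`(x−t_1)⋯(x−t_{n-1})·(x − (α t^ℓ + β)/(t_1⋯t_{n-1})) − γ` is separable over
`K(t_1,…,t_{n-1},t)` and its Galois group is isomorphic to `S_n`. -/
theorem aux_poly_galois_Sn (K : Type*) [Field K] [CharZero K]
    (n ℓ : ℕ) (hn : 4 ≤ n) (hℓ : 1 ≤ ℓ)
    (α β γ : K) (hα : α ≠ 0) (hγ : γ ≠ 0) :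
    (auxPoly K n ℓ α β γ).Separable ∧
      Nonempty ((auxPoly K n ℓ α β γ).Gal ≃* Equiv.Perm (Fin n)) := by
  obtain ⟨k, rfl⟩ : ∃ k, n = k + 2 := ⟨n - 2, by omega⟩
  exact main_gen (L := FractionRing (MvPolynomial (Option (Fin (k + 1))) K))
    (Ω := AlgebraicClosure (FractionRing (MvPolynomial (Option (Fin (k + 1))) K)))
    k ℓ (by omega) hℓ α β γ hα hγ (auxPoly K (k + 2) ℓ α β γ) rfl
end

section
/- Let K be a field of characteristic 0, let n ≥ 2 be an integer, let β ∈ K and let γ be a nonzero element of K such that (n−1)^{n−1}(β−1)^n + n^n·γ ≠ 0. Then the polynomial (x−t_1)⋯(x−t_{n-1})·(x − β·t_1^{−1}⋯t_{n-1}^{−1}) − γ, viewed as a polynomial in x over the rational function field K(t_1,…,t_{n-1}), is separable. -/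
open Polynomial

/-- The polynomial `(x−t_1)⋯(x−t_{n-1})·(x − β·t_1^{-1}⋯t_{n-1}^{-1}) − γ` over the
rational function field `K(t_1,…,t_{n-1})`. -/
noncomputable def auxPoly' (K : Type*) [Field K] (n : ℕ) (β γ : K) :
    Polynomial (FractionRing (MvPolynomial (Fin (n - 1)) K)) :=
  (∏ i : Fin (n - 1), (X - C (algebraMap (MvPolynomial (Fin (n - 1)) K)
      (FractionRing (MvPolynomial (Fin (n - 1)) K)) (MvPolynomial.X i)))) *
    (X - C (algebraMap (MvPolynomial (Fin (n - 1)) K)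
        (FractionRing (MvPolynomial (Fin (n - 1)) K)) (MvPolynomial.C β) *
      (∏ i : Fin (n - 1), algebraMap (MvPolynomial (Fin (n - 1)) K)
        (FractionRing (MvPolynomial (Fin (n - 1)) K)) (MvPolynomial.X i))⁻¹)) -
    C (algebraMap (MvPolynomial (Fin (n - 1)) K)
      (FractionRing (MvPolynomial (Fin (n - 1)) K)) (MvPolynomial.C γ))

lemma sep_of_spec {A L K : Type*} [CommRing A] [Field L] [Field K] [CharZero K]
    (φ : A →+* K) (ι : A →+* L) (hι : Function.Injective ι) (F : A[X])
    (hd : F.natDegree ≤ (F.map φ).natDegree) (h0 : (F.map φ).natDegree ≠ 0)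
    (hs : (F.map φ).Separable) : (F.map ι).Separable := by
  have hr : resultant F (derivative F) (F.map φ).natDegree ((F.map φ).natDegree - 1) ≠ 0 := by
    intro h
    have h1 := resultant_map_map F (derivative F) (F.map φ).natDegree
      ((F.map φ).natDegree - 1) φ
    rw [h, map_zero, ← derivative_map] at h1
    have h2 := resultant_ne_zero _ _ hs
    rw [natDegree_derivative] at h2
    exact h2 h1
  obtain ⟨p, q, -, -, e⟩ := exists_mul_add_mul_eq_C_resultant F (derivative F)
    (m := (F.map φ).natDegree) (n := (F.map φ).natDegree - 1) hd
    ((natDegree_derivative_le F).trans (Nat.sub_le_sub_right hd 1)) (by simp [h0])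
  set r := resultant F (derivative F) (F.map φ).natDegree ((F.map φ).natDegree - 1)
  have hr' : ι r ≠ 0 := fun h => hr (hι (by simpa using h))
  have e' := congrArg (Polynomial.map ι) e
  simp only [Polynomial.map_add, Polynomial.map_mul, map_C, ← derivative_map] at e'
  refine ⟨C (ι r)⁻¹ * p.map ι, C (ι r)⁻¹ * q.map ι, ?_⟩
  calc _ = C (ι r)⁻¹ * (F.map ι * p.map ι + derivative (F.map ι) * q.map ι) := by ring
    _ = 1 := by rw [e', ← C_mul, inv_mul_cancel₀ hr', C_1]

lemma spec_sep {K : Type*} [Field K] [CharZero K] (k : ℕ) (β γ : K) (hγ : γ ≠ 0)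
    (h : ((k : K) + 1) ^ (k + 1) * (β - 1) ^ (k + 2) + ((k : K) + 2) ^ (k + 2) * γ ≠ 0) :
    ((X - C 1) ^ (k + 1) * (X - C β) - C γ : K[X]).Separable := by
  have hk : (k : K) + 2 ≠ 0 := by exact_mod_cast (by omega : k + 2 ≠ 0)
  set a : K := (1 + (k + 1) * β) / (k + 2) with ha
  have hder : derivative ((X - C 1) ^ (k + 1) * (X - C β) - C γ : K[X])
      = (X - C 1) ^ k * (C ((k : K) + 2) * (X - C a)) := by
    have h1 : C ((k : K) + 2) * (X - C a) = C ((k : K) + 2) * X - (1 + (C (k : K) + 1) * C β) := by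
      rw [mul_sub, ← C_mul, ha, mul_div_cancel₀ _ hk]
      simp
    have h2 : (C 2 : K[X]) = 2 := rfl
    rw [h1]
    simp [h2, derivative_pow]
    ring
  have key : ∀ (f : K[X]) (b : K), f.eval b ≠ 0 → IsCoprime f (X - C b) := by
    intro f b hb
    refine IsCoprime.symm ?_
    rw [(irreducible_X_sub_C b).coprime_iff_not_dvd, dvd_iff_isRoot]
    exact hb
  rw [Separable, hder]
  refine IsCoprime.mul_right (IsCoprime.pow_right (key _ _ (by simpa using hγ)))
    (IsCoprime.mul_right ?_ (key _ _ ?_))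
  · exact (isCoprime_mul_unit_right_right (isUnit_C.mpr hk.isUnit) _ 1).mpr isCoprime_one_right |> fun h => by simpa using h
  · have e1 : a - 1 = (k + 1) * (β - 1) / (k + 2) := by rw [ha]; field_simp; ring
    have e2 : a - β = -(β - 1) / (k + 2) := by rw [ha]; field_simp; ring
    simp only [eval_sub, eval_mul, eval_pow, eval_X, eval_C, e1, e2]
    intro h3
    apply h
    rw [div_pow, div_mul_div_comm, ← pow_succ, sub_eq_zero, div_eq_iff (pow_ne_zero _ hk)] at h3
    rw [mul_pow] at h3
    linear_combination -h3

/-- **Proposition 5.5.**  Let `K` have characteristic `0`, `n ≥ 2`, `β ∈ K` and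
`γ ∈ K^*` with `(n−1)^{n−1}(β−1)^n + n^n·γ ≠ 0`.  Then the polynomial
`(x−t_1)⋯(x−t_{n-1})·(x − β·t_1^{-1}⋯t_{n-1}^{-1}) − γ` is separable over
`K(t_1,…,t_{n-1})`. -/
theorem aux_poly_separable (K : Type*) [Field K] [CharZero K]
    (n : ℕ) (hn : 2 ≤ n) (β γ : K) (hγ : γ ≠ 0)
    (h : ((n : K) - 1) ^ (n - 1) * (β - 1) ^ n + (n : K) ^ n * γ ≠ 0) :
    (auxPoly' K n β γ).Separable := by
  obtain ⟨k, rfl⟩ : ∃ k, n = k + 2 := ⟨n - 2, by omega⟩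
  change (auxPoly' K (k + 2) β γ).Separable
  set A := MvPolynomial (Fin (k + 1)) K with hA
  set L := FractionRing A with hL
  let P : A := ∏ i : Fin (k + 1), MvPolynomial.X i
  let F : A[X] := (∏ i : Fin (k + 1), (X - C (MvPolynomial.X i : A))) *
    (C P * X - C (MvPolynomial.C β)) - C (MvPolynomial.C γ * P)
  let φ : A →+* K := MvPolynomial.eval (fun _ => 1)
  have hφX : ∀ i, φ (MvPolynomial.X i) = 1 := fun i => MvPolynomial.eval_X i
  have hφC : ∀ c, φ (MvPolynomial.C c) = c := fun c => MvPolynomial.eval_C c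
  have hφP : φ P = 1 := by
    simp only [P, map_prod, hφX, Finset.prod_const_one]
  have hFφ : F.map φ = (X - C 1) ^ (k + 1) * (X - C β) - C γ := by
    simp only [F, Polynomial.map_sub, Polynomial.map_mul, Polynomial.map_prod, map_X, map_C,
      map_mul, hφP, hφX, hφC]
    simp
  have hdeg : (F.map φ).natDegree = k + 2 := by
    rw [hFφ, natDegree_sub_C, natDegree_mul (pow_ne_zero _ (X_sub_C_ne_zero _)) (X_sub_C_ne_zero _),
      natDegree_pow, natDegree_X_sub_C, natDegree_X_sub_C]
    ring
  have hdF : F.natDegree ≤ k + 2 := by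
    simp only [F]
    rw [natDegree_sub_C]
    refine natDegree_mul_le.trans ?_
    have h1 : (∏ i : Fin (k + 1), (X - C (MvPolynomial.X i : A))).natDegree = k + 1 := by
      rw [natDegree_finsetProd_X_sub_C_eq_card]
      simp
    have h2 : (C P * X - C (MvPolynomial.C β) : A[X]).natDegree ≤ 1 := by
      rw [natDegree_sub_C]
      exact (natDegree_C_mul_le _ _).trans natDegree_X_le
    omega
  have hinj : Function.Injective (algebraMap A L) := IsFractionRing.injective A L
  have hs := sep_of_spec φ (algebraMap A L) hinj F (by rw [hdeg]; exact hdF) (by omega)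
    (by
      rw [hFφ]
      refine spec_sep k β γ hγ ?_
      have e1 : ((k + 2 : ℕ) : K) - 1 = k + 1 := by push_cast; ring
      have e2 : ((k + 2 : ℕ) : K) = k + 2 := by push_cast; ring
      rw [e1, e2] at h
      exact h)
  have hP : algebraMap A L P ≠ 0 := by
    intro h0
    have : P = 0 := hinj (by simpa using h0)
    rw [this, map_zero] at hφP
    exact zero_ne_one hφP
  set G : L[X] := auxPoly' K (k + 2) β γ with hG
  have hF : F.map (algebraMap A L) = C (algebraMap A L P) * G := by
    have e : (C (algebraMap A L P) : L[X]) * C ((algebraMap A L P)⁻¹) = 1 := by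
      rw [← C_mul, mul_inv_cancel₀ hP, C_1]
    have e0 : (∏ i : Fin (k + 1), algebraMap A L (MvPolynomial.X i)) = algebraMap A L P := by
      rw [map_prod]
    have e3 : G = (∏ i : Fin (k + 1), (X - C (algebraMap A L
        (MvPolynomial.X i)))) * (X - C (algebraMap A L (MvPolynomial.C β) *
          (algebraMap A L P)⁻¹)) - C (algebraMap A L (MvPolynomial.C γ)) := by
      rw [← e0]; rfl
    rw [e3]
    simp only [F, Polynomial.map_sub, Polynomial.map_mul, Polynomial.map_prod, map_X, map_C,
      C_mul, map_mul]
    linear_combination (∏ i : Fin (k + 1), (X - C (algebraMap A L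
        (MvPolynomial.X i)))) * C (algebraMap A L (MvPolynomial.C β)) * e
  rw [hF] at hs
  exact Separable.of_mul_right hs
end

section
/- For every integer ℓ ≥ 1, the polynomial (x²−1)(x + t^ℓ − 1) − 1, viewed as a polynomial in x over the rational function field ℚ(t), is irreducible over ℚ(t) and its Galois group over ℚ(t) is isomorphic to the symmetric group S_3; moreover its specialization at t = 0, namely (x²−1)(x−1) − 1 ∈ ℚ[x], is separable. -/
open Polynomial

theorem cubic_gal_aux {F : Type*} [Field F] [CharZero F] (P : Cubic F) (ha : P.a = 1)
    (hirr : Irreducible P.toPoly) (hd : ∀ b : F, b ^ 2 ≠ P.discr) :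
    Nonempty (P.toPoly.Gal ≃* Equiv.Perm (Fin 3)) := by
  classical
  have ha0 : P.a ≠ 0 := by rw [ha]; exact one_ne_zero
  have hsp := SplittingField.splits P.toPoly
  have hdeg : P.toPoly.natDegree = 3 := Cubic.natDegree_of_a_ne_zero ha0
  have hroots : Fintype.card (P.toPoly.rootSet P.toPoly.SplittingField) = 3 := by
    rw [card_rootSet_eq_natDegree hirr.separable hsp, hdeg]
  have h3 : 3 ∣ Nat.card P.toPoly.Gal := by
    have := Gal.prime_degree_dvd_card hirr (by rw [hdeg]; exact Nat.prime_three)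
    rwa [hdeg] at this
  have h2 : 2 ∣ Nat.card P.toPoly.Gal := by
    rw [Gal.card_of_separable hirr.separable]
    obtain ⟨x, y, z, hxyz⟩ := (Cubic.splits_iff_roots_eq_three ha0).1 hsp
    have hD := Cubic.discr_eq_prod_three_roots ha0 hxyz
    set δ := (algebraMap F P.toPoly.SplittingField P.a *
      algebraMap F P.toPoly.SplittingField P.a * (x - y) * (x - z) * (y - z)) with hδ
    have hI := X_pow_sub_C_irreducible_of_prime Nat.prime_two hd
    have hm : X ^ 2 - C P.discr = minpoly F δ := by
      apply minpoly.eq_of_irreducible_of_monic hI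
      · simp [hD]
      · exact monic_X_pow_sub_C _ two_ne_zero
    have := minpoly.degree_dvd (K := F) (x := δ) (.of_finite F δ)
    rwa [← hm, natDegree_X_pow_sub_C] at this
  have h6 : 6 ∣ Nat.card P.toPoly.Gal :=
    Nat.Coprime.mul_dvd_of_dvd_of_dvd (by norm_num : Nat.Coprime 2 3) h2 h3
  have : Fact ((P.toPoly.map (algebraMap F P.toPoly.SplittingField)).Splits) := ⟨hsp⟩
  have hinj := Gal.galActionHom_injective P.toPoly P.toPoly.SplittingField
  have hc : Nat.card (Equiv.Perm (P.toPoly.rootSet P.toPoly.SplittingField)) = 6 := by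
    rw [Nat.card_eq_fintype_card, Fintype.card_perm, hroots]; rfl
  have hle := Nat.card_le_card_of_injective _ hinj
  have hpos : 0 < Nat.card P.toPoly.Gal := Nat.card_pos
  have heq : Nat.card P.toPoly.Gal = 6 := le_antisymm (hc ▸ hle) (Nat.le_of_dvd hpos h6)
  have hbij := (Nat.bijective_iff_injective_and_card _).2 ⟨hinj, heq.trans hc.symm⟩
  exact ⟨(MulEquiv.ofBijective _ hbij).trans
    ((Fintype.equivFinOfCardEq hroots).permCongrHom)⟩

theorem cubic_rat_aux (q : ℚ) : q ^ 3 - q - 1 ≠ 0 := by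
  intro h
  have hi : IsIntegral ℤ q := by
    refine ⟨X ^ 3 - X - 1, by monicity!, ?_⟩
    simpa using h
  obtain ⟨n, rfl⟩ := IsIntegrallyClosed.isIntegral_iff.1 hi
  have h' : n * (n ^ 2 - 1) = 1 := by
    have : (n : ℚ) ^ 3 - n - 1 = 0 := by simpa using h
    have : n ^ 3 - n - 1 = 0 := by exact_mod_cast this
    linarith
  rcases Int.eq_one_or_neg_one_of_mul_eq_one h' with rfl | rfl <;> norm_num at h'

theorem sq_rat_aux (q : ℚ) : q ^ 2 ≠ 5 := by
  intro h
  have hi : IsIntegral ℤ q := by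
    refine ⟨X ^ 2 - 5, by monicity!, ?_⟩
    simp [h]
  obtain ⟨n, rfl⟩ := IsIntegrallyClosed.isIntegral_iff.1 hi
  have h' : n ^ 2 = 5 := by
    have : (n : ℚ) ^ 2 = 5 := by simpa using h
    exact_mod_cast this
  have h1 : n ≤ 2 := by nlinarith
  have h2 : -2 ≤ n := by nlinarith
  interval_cases n <;> norm_num at h'

/-- The case `n = 3` of the main polynomial: for every `ℓ ≥ 1`, the polynomial
`(x²−1)(x + t^ℓ − 1) − 1` is irreducible over `ℚ(t)` with Galois group isomorphic to
`S_3`, and its specialization `(x²−1)(x−1) − 1 ∈ ℚ[x]` at `t = 0` is separable. -/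
theorem cubic_main_poly (ℓ : ℕ) (hℓ : 1 ≤ ℓ) :
    Irreducible ((X ^ 2 - 1) * (X + C (RatFunc.X ^ ℓ - 1)) - 1 :
      Polynomial (RatFunc ℚ)) ∧
    Nonempty (((X ^ 2 - 1) * (X + C (RatFunc.X ^ ℓ - 1)) - 1 :
      Polynomial (RatFunc ℚ)).Gal ≃* Equiv.Perm (Fin 3)) ∧
    ((X ^ 2 - 1) * (X - 1) - 1 : Polynomial ℚ).Separable := by
  have hl0 : ℓ ≠ 0 := by omega
  set s : RatFunc ℚ := RatFunc.X ^ ℓ - 1 with hs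
  have hsa : s = algebraMap ℚ[X] (RatFunc ℚ) (X ^ ℓ - 1) := by simp [hs]
  have hinj : Function.Injective (algebraMap ℚ[X] (RatFunc ℚ)) := RatFunc.algebraMap_injective ℚ
  set P : Cubic (RatFunc ℚ) := ⟨1, s, -1, -(s + 1)⟩ with hP
  have hpoly : ((X ^ 2 - 1) * (X + C s) - 1 : Polynomial (RatFunc ℚ)) = P.toPoly := by
    simp only [hP, Cubic.toPoly, map_neg, map_add, map_one]; ring
  rw [hpoly]
  have ha0 : P.a ≠ 0 := one_ne_zero
  have hdeg : P.toPoly.natDegree = 3 := Cubic.natDegree_of_a_ne_zero ha0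
  have hirr : Irreducible P.toPoly := by
    refine irreducible_of_degree_le_three_of_not_isRoot (by simp [hdeg]) ?_
    intro x hx
    have hx' : x ^ 3 + s * x ^ 2 - x - (s + 1) = 0 := by
      rw [← hpoly] at hx
      simp only [IsRoot.def, eval_sub, eval_mul, eval_add, eval_pow, eval_X, eval_C, eval_one] at hx
      linear_combination hx
    have hi : IsIntegral ℚ[X] x := by
      refine ⟨X ^ 3 + C (X ^ ℓ - 1) * X ^ 2 - X - C (X ^ ℓ - 1 + 1), by monicity!, ?_⟩
      simp only [eval₂_sub, eval₂_add, eval₂_mul, eval₂_pow, eval₂_X, eval₂_C]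
      rw [map_add, ← hsa, map_one]
      exact hx'
    obtain ⟨r, rfl⟩ := IsIntegrallyClosed.isIntegral_iff.1 hi
    have hr : r ^ 3 + (X ^ ℓ - 1) * r ^ 2 - r - (X ^ ℓ - 1 + 1) = 0 := by
      apply hinj
      rw [hsa] at hx'
      simpa only [map_sub, map_add, map_mul, map_pow, map_one, map_zero] using hx'
    have := congrArg (eval 1) hr
    simp at this
    exact cubic_rat_aux _ this
  refine ⟨hirr, cubic_gal_aux P rfl hirr ?_, ?_⟩
  · intro b hb
    have hb' : b ^ 2 = algebraMap ℚ[X] (RatFunc ℚ) (4 * (X ^ ℓ - 1) ^ 4 + 4 * (X ^ ℓ - 1) ^ 3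
        - 8 * (X ^ ℓ - 1) ^ 2 - 36 * (X ^ ℓ - 1) - 23) := by
      rw [hb]
      simp only [map_sub, map_add, map_mul, map_pow, map_one, map_ofNat, hP, Cubic.discr, hsa]
      ring
    have hi : IsIntegral ℚ[X] b :=
      IsIntegral.of_pow two_pos (hb' ▸ isIntegral_algebraMap)
    obtain ⟨r, rfl⟩ := IsIntegrallyClosed.isIntegral_iff.1 hi
    rw [← map_pow] at hb'
    have := congrArg (eval 0) (hinj hb')
    simp [hl0] at this
    norm_num at this
    exact sq_rat_aux _ this
  · refine ⟨C (19/5) - C (24/5) * X, -1 - C (9/5) * X + C (8/5) * X ^ 2, ?_⟩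
    have hder : derivative ((X ^ 2 - 1) * (X - 1) - 1 : ℚ[X]) = 3 * X ^ 2 - 2 * X - 1 := by
      simp [derivative_mul]
      ring
    rw [hder]
    have e1 : (C (19/5) : ℚ[X]) = 19 * C (1/5) := by
      rw [← C_ofNat, ← C_mul]; norm_num
    have e2 : (C (24/5) : ℚ[X]) = 24 * C (1/5) := by
      rw [← C_ofNat, ← C_mul]; norm_num
    have e3 : (C (9/5) : ℚ[X]) = 9 * C (1/5) := by
      rw [← C_ofNat, ← C_mul]; norm_num
    have e4 : (C (8/5) : ℚ[X]) = 8 * C (1/5) := by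
      rw [← C_ofNat, ← C_mul]; norm_num
    have e5 : (5 * C (1/5) : ℚ[X]) = 1 := by
      rw [← C_ofNat, ← C_mul]; norm_num
    rw [e1, e2, e3, e4]
    generalize (C (1/5) : ℚ[X]) = c at *
    linear_combination (3 * X ^ 2 - 2 * X) * e5
end
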